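/- A matrix Y ∈ M_{2ℓ+1}(ℂ) satisfies Y·W(x) = W(x)·Y for all x ∈ (-1,1) if and only if Y is a complex linear combination of the identity I and the involution J. Moreover J·P_n(x)·J = P_n(x) for every n ∈ ℕ and every x. -/

import Mathlib

open Finset Polynomial MeasureTheory Matrix
open scoped BigOperators ComplexOrder

noncomputable section

/-- q-shifted factorial `(a;p)_n`. -/
def qp (a p : ℂ) (n : ℕ) : ℂ := ∏ j ∈ Finset.range n, (1 - a * p ^ j)

/-- q-Racah polynomial `R_n(μ(x);α,β,γ,δ;p)`. -/
def qRacah (p α β γ δ : ℂ) (n x : ℕ) : ℂ :=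
  ∑ k ∈ Finset.range (min n x + 1),
    qp (p ^ (-(n : ℤ))) p k * qp (α * β * p ^ (n + 1)) p k *
        qp (p ^ (-(x : ℤ))) p k * qp (γ * δ * p ^ (x + 1)) p k /
      (qp (α * p) p k * qp (β * δ * p) p k * qp (γ * p) p k * qp p p k) * p ^ k

/-- `IsUltra C` says that for each base `p`, parameter `β` and degree `n`, `C p β n` is
the continuous q-ultraspherical polynomial: it has degree at most `n` and its values at
`(z+z⁻¹)/2` are given by the symmetric Laurent sum. -/
def IsUltra (C : ℂ → ℂ → ℕ → Polynomial ℂ) : Prop :=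
  ∀ (p β : ℂ) (n : ℕ),
    (C p β n).degree ≤ (n : ℕ) ∧
      ∀ z : ℂ, z ≠ 0 →
        (C p β n).eval ((z + z⁻¹) / 2) =
          ∑ r ∈ Finset.range (n + 1),
            qp β p r * qp β p (n - r) / (qp p p r * qp p p (n - r)) * z ^ ((n : ℤ) - 2 * r)

/-- The matrix-valued polynomial `P_n` (entries in `Polynomial ℂ`); here `L = 2ℓ`. -/
def Pm (q : ℂ) (L : ℕ) (C : ℂ → ℂ → ℕ → Polynomial ℂ) (n : ℕ) :
    Matrix (Fin (L + 1)) (Fin (L + 1)) (Polynomial ℂ) :=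
  Matrix.of fun i j =>
    ∑ k ∈ Finset.Icc (i : ℕ) (min L (n + (j : ℕ))),
      Polynomial.C
          ((-1 : ℂ) ^ k *
            q ^ ((n : ℤ) + (2 * (k : ℤ) + 1) * ((k : ℤ) - ((i : ℕ) : ℤ)) +
                ((j : ℕ) : ℤ) * (2 * (k : ℤ) + 1) + 2 * (k : ℤ) * ((L : ℤ) + (n : ℤ) + 1) -
                (k : ℤ) ^ 2) *
            (qp (q ^ 2) (q ^ 2) k * qp (q ^ 2) (q ^ 2) (k + (i : ℕ)) /
              (qp (q ^ 2) (q ^ 2) (2 * k) * qp (q ^ 2) (q ^ 2) (i : ℕ))) *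
            (qp (q ^ (-(2 * (L : ℤ)))) (q ^ 2) k *
                qp (q ^ (-(2 * ((j : ℕ) : ℤ) + 2 * (n : ℤ)))) (q ^ 2) k /
              (qp (q ^ 2) (q ^ 2) k * qp (q ^ (2 * (L : ℤ) + 4)) (q ^ 2) k)) *
            (qp (q ^ 2) (q ^ 2) (n + (j : ℕ) - k) /
              qp (q ^ (4 * (k : ℤ) + 4)) (q ^ 2) (n + (j : ℕ) - k)) *
            qRacah (q ^ 2) 1 1 (q ^ (-(2 * (n : ℤ) + 2 * ((j : ℕ) : ℤ) + 2)))
              (q ^ (-(2 * (L : ℤ) + 2))) k (j : ℕ)) *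
        (C (q ^ 2) (q ^ (-(2 * (k : ℤ)))) (k - (i : ℕ)) *
          C (q ^ 2) (q ^ (2 * (k : ℤ) + 2)) (n + (j : ℕ) - k))

/-- Evaluation of the matrix-valued polynomial `P_n` at a point. -/
def evP (q : ℂ) (L : ℕ) (C : ℂ → ℂ → ℕ → Polynomial ℂ) (n : ℕ) (x : ℂ) :
    Matrix (Fin (L + 1)) (Fin (L + 1)) ℂ :=
  (Pm q L C n).map (Polynomial.eval x)

/-- The coefficients `α_t(m,n)` of the weight. -/
def alphaC (q : ℂ) (L m n t : ℕ) : ℂ :=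
  q ^ (2 * (n : ℤ) * ((L : ℤ) + 1) - (n : ℤ) ^ 2 - (2 * (L : ℤ) + 3) * (t : ℤ) + (t : ℤ) ^ 2 -
      (L : ℤ) + (m : ℤ)) *
    ((1 - q ^ (2 * (L : ℤ) + 2)) / (1 - q ^ (2 * (m : ℤ) + 2))) *
    (qp (q ^ 2) (q ^ 2) (L - n) * qp (q ^ 2) (q ^ 2) n / qp (q ^ 2) (q ^ 2) L) *
    ((-1 : ℂ) ^ ((m : ℤ) - (t : ℤ)) * qp (q ^ (2 * (m : ℤ) - 2 * (L : ℤ))) (q ^ 2) (n - t) /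
      qp (q ^ (2 * (m : ℤ) + 4)) (q ^ 2) (n - t)) *
    (qp (q ^ (2 * (L : ℤ) + 4 - 2 * (t : ℤ))) (q ^ 2) t / qp (q ^ 2) (q ^ 2) t)

/-- The matrix weight `W(x)`. -/
def Wm (q : ℂ) (L : ℕ) (x : ℂ) : Matrix (Fin (L + 1)) (Fin (L + 1)) ℂ :=
  Matrix.of fun i j =>
    ∑ t ∈ Finset.range (max (i : ℕ) (j : ℕ) + 1),
      alphaC q L (min (i : ℕ) (j : ℕ)) (max (i : ℕ) (j : ℕ)) t *
        (Polynomial.Chebyshev.U ℂ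
            ((min (i : ℕ) (j : ℕ) : ℤ) + (max (i : ℕ) (j : ℕ) : ℤ) - 2 * (t : ℤ))).eval x

/-- The antidiagonal involution `J`. -/
def Jm (L : ℕ) : Matrix (Fin (L + 1)) (Fin (L + 1)) ℂ :=
  Matrix.of fun i j => if (i : ℕ) + (j : ℕ) = L then 1 else 0

/-- The diagonal leading-coefficient matrix `Γ_n`. -/
def Gam (q : ℂ) (L n : ℕ) : Matrix (Fin (L + 1)) (Fin (L + 1)) ℂ :=
  Matrix.diagonal fun i =>
    2 ^ n * q ^ n * qp (q ^ (2 * ((i : ℕ) : ℤ) + 2)) (q ^ 2) n *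
        qp (q ^ (2 * (L : ℤ) - 2 * ((i : ℕ) : ℤ) + 2)) (q ^ 2) n /
      (qp (q ^ 2) (q ^ 2) n * qp (q ^ (2 * (L : ℤ) + 4)) (q ^ 2) n)

/-- The squared-norm matrix `G_m`. -/
def Gmat (q : ℂ) (L m : ℕ) : Matrix (Fin (L + 1)) (Fin (L + 1)) ℂ :=
  Matrix.diagonal fun i =>
    q ^ (2 * (m : ℤ) - (L : ℤ)) * (1 - q ^ (2 * (L : ℤ) + 2)) ^ 2 /
      ((1 - q ^ (2 * (m : ℤ) + 2 * ((i : ℕ) : ℤ) + 2)) *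
        (1 - q ^ (2 * (L : ℤ) - 2 * ((i : ℕ) : ℤ) + 2 * (m : ℤ) + 2)))

/-- The unipotent lower triangular matrix `L(x)` of the LDU decomposition. -/
def Lm (q : ℂ) (L : ℕ) (C : ℂ → ℂ → ℕ → Polynomial ℂ) (x : ℂ) :
    Matrix (Fin (L + 1)) (Fin (L + 1)) ℂ :=
  Matrix.of fun m k =>
    if (k : ℕ) ≤ (m : ℕ) then
      q ^ (((m : ℕ) : ℤ) - ((k : ℕ) : ℤ)) * qp (q ^ 2) (q ^ 2) (m : ℕ) *
          qp (q ^ 2) (q ^ 2) (2 * (k : ℕ) + 1) /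
          (qp (q ^ 2) (q ^ 2) ((m : ℕ) + (k : ℕ) + 1) * qp (q ^ 2) (q ^ 2) (k : ℕ)) *
        (C (q ^ 2) (q ^ (2 * (k : ℕ) + 2)) ((m : ℕ) - (k : ℕ))).eval x
    else 0

/-- The claimed inverse of `L(x)`. -/
def Linv (q : ℂ) (L : ℕ) (C : ℂ → ℂ → ℕ → Polynomial ℂ) (x : ℂ) :
    Matrix (Fin (L + 1)) (Fin (L + 1)) ℂ :=
  Matrix.of fun k n =>
    if (n : ℕ) ≤ (k : ℕ) then
      q ^ ((2 * ((k : ℕ) : ℤ) + 1) * (((k : ℕ) : ℤ) - ((n : ℕ) : ℤ))) *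
          qp (q ^ 2) (q ^ 2) (k : ℕ) * qp (q ^ 2) (q ^ 2) ((k : ℕ) + (n : ℕ)) /
          (qp (q ^ 2) (q ^ 2) (2 * (k : ℕ)) * qp (q ^ 2) (q ^ 2) (n : ℕ)) *
        (C (q ^ 2) (q ^ (-(2 * ((k : ℕ) : ℤ)))) ((k : ℕ) - (n : ℕ))).eval x
    else 0

/-- The constants `c_k(ℓ)`. -/
def ckC (q : ℂ) (L k : ℕ) : ℂ :=
  q ^ (-(L : ℤ)) / 4 * (1 - q ^ (4 * k + 2)) * qp (q ^ 2) (q ^ 2) (L + k + 1) *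
      qp (q ^ 2) (q ^ 2) (L - k) * qp (q ^ 2) (q ^ 2) k ^ 4 /
    (qp (q ^ 2) (q ^ 2) (2 * k + 1) ^ 2 * qp (q ^ 2) (q ^ 2) L ^ 2)

/-- The diagonal part `T(x)` of the LDU decomposition. -/
def Tm (q : ℂ) (L : ℕ) (x : ℂ) : Matrix (Fin (L + 1)) (Fin (L + 1)) ℂ :=
  Matrix.diagonal fun k =>
    ckC q L (k : ℕ) *
      (4 * ∏ j ∈ Finset.Icc 1 (k : ℕ), (1 - 2 * (2 * x ^ 2 - 1) * q ^ (2 * j) + q ^ (4 * j)))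

/-- The coefficient matrix `M₁(z)` of the q-difference operator `D₁`. -/
def M1f (q : ℂ) (L : ℕ) (z : ℂ) : Matrix (Fin (L + 1)) (Fin (L + 1)) ℂ :=
  Matrix.of fun i j =>
    if (j : ℕ) = (i : ℕ) + 1 then
      -(q ^ (1 - ((i : ℕ) : ℤ)) * (1 - q ^ (2 * (i : ℕ) + 2)) / (1 - q ^ 2) ^ 2 *
        (z / (1 - z ^ 2)))
    else if (j : ℕ) = (i : ℕ) then
      q ^ (1 - ((i : ℕ) : ℤ)) / (1 - q ^ 2) ^ 2 *
        ((1 - q ^ (2 * (i : ℕ) + 2) * z ^ 2) / (1 - z ^ 2))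
    else 0

/-- `M₂(z) = J M₁(z) J`. -/
def M2f (q : ℂ) (L : ℕ) (z : ℂ) : Matrix (Fin (L + 1)) (Fin (L + 1)) ℂ :=
  Jm L * M1f q L z * Jm L

/-- The eigenvalue matrix `Λ_n(1)`. -/
def Lam1 (q : ℂ) (L n : ℕ) : Matrix (Fin (L + 1)) (Fin (L + 1)) ℂ :=
  Matrix.diagonal fun j =>
    (q ^ (-((j : ℕ) : ℤ) - (n : ℤ) - 1) + q ^ (((j : ℕ) : ℤ) + (n : ℤ) + 1)) / (q⁻¹ - q) ^ 2

/-- The eigenvalue matrix `Λ_n(2) = J Λ_n(1) J`. -/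
def Lam2 (q : ℂ) (L n : ℕ) : Matrix (Fin (L + 1)) (Fin (L + 1)) ℂ :=
  Jm L * Lam1 q L n * Jm L

/-- The diagonal coefficient matrix `K₁(z)` of the decoupled operator. -/
def K1f (q : ℂ) (L : ℕ) (z : ℂ) : Matrix (Fin (L + 1)) (Fin (L + 1)) ℂ :=
  Matrix.diagonal fun i =>
    q ^ (1 - ((i : ℕ) : ℤ)) / (1 - q ^ 2) ^ 2 *
      ((1 - q ^ (2 * (i : ℕ) + 2) * z ^ 2) / (1 - z ^ 2))

/-- The symmetric Laurent polynomial `Ĉ_k(z;β|p)`. -/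
def Chat (p β : ℂ) (k : ℕ) (z : ℂ) : ℂ :=
  ∑ r ∈ Finset.range (k + 1),
    qp β p r * qp β p (k - r) / (qp p p r * qp p p (k - r)) * z ^ ((k : ℤ) - 2 * (r : ℤ))

/-- The matrix polynomials `R_n(x) = L(x)ᵀ P_n(x) Γ_n⁻¹`. -/
def Rmat (q : ℂ) (L : ℕ) (C : ℂ → ℂ → ℕ → Polynomial ℂ) (n : ℕ) (x : ℂ) :
    Matrix (Fin (L + 1)) (Fin (L + 1)) ℂ :=
  (Lm q L C x)ᵀ * evP q L C n x * (Gam q L n)⁻¹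

/-
Contiguous relations for the q-Racah sums and the three-term recurrence of the q-ultraspherical
polynomials express `2x` times the `j`-th column of `P_n(x)` through the `j`-th columns of
`P_{n+1}(x)` and `P_{n-1}(x)` and the columns `j ± 1` of `P_n(x)`, with coefficients invariant
under `j ↦ L - j`. Moreover `P_0 = I`: the triangular factors of `P_0` are mutually inverse, being
eigenvectors with distinct eigenvalues of adjoint second-order recurrences. By induction on `n`,
the entries of `P_n(x)` are invariant under `(i, j) ↦ (L - i, L - j)`, which is `J P_n J = P_n`.

If `Y` commutes with `W(x)` for infinitely many `x`, it commutes with every coefficient of the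
matrix polynomial `W`. The coefficient `A` of `x^L` is supported on the antidiagonal, and there a
strict inequality for q-factorials separates the squares of the inner entries from those at the two
corners; together with `JAJ = A` this makes the first row of `Y` vanish except at its ends. Hence
`Z = Y - Y_{0,0} I - Y_{0,L} J` has zero first row. The coefficient `B` of `x^(L-1)` is supported
on `i + j = L ± 1`, and commutation with `A` and `B` propagates the vanishing from row to row, so
`Z = 0`.
-/

/-! ### q-shifted factorials -/

section QFactorial

variable {p : ℂ}

@[simp] lemma qp_zero (a p : ℂ) : qp a p 0 = 1 := by simp [qp]

lemma qp_succ (a p : ℂ) (n : ℕ) : qp a p (n + 1) = qp a p n * (1 - a * p ^ n) :=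
  Finset.prod_range_succ _ _

lemma qp_mul_one_sub (a p : ℂ) (n : ℕ) :
    qp (p * a) p n * (1 - a) = qp a p n * (1 - a * p ^ n) := by
  induction n with
  | zero => simp
  | succ n ih => rw [qp_succ, qp_succ]; linear_combination (1 - a * p * p ^ n) * ih

lemma qp_succ' (a p : ℂ) (n : ℕ) : qp a p (n + 1) = (1 - a) * qp (p * a) p n := by
  rw [qp_succ, ← qp_mul_one_sub, mul_comm]

lemma qp_self_succ (p : ℂ) (n : ℕ) : qp p p (n + 1) = qp p p n * (1 - p ^ (n + 1)) := by
  rw [qp_succ, pow_succ']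

lemma qp_self_mul_qp (p : ℂ) (a n : ℕ) :
    qp p p a * qp (p ^ (a + 1)) p n = qp p p (a + n) := by
  simp only [qp, Finset.prod_range_add, ← pow_succ', ← pow_add, add_right_comm a 1]

lemma qp_ne_zero_of_le {a : ℂ} {m n : ℕ} (h : qp a p n ≠ 0) (hmn : m ≤ n) : qp a p m ≠ 0 :=
  Finset.prod_ne_zero_iff.2 fun i hi =>
    Finset.prod_ne_zero_iff.1 h i (Finset.range_mono hmn hi)

lemma qp_pow_neg_eq_zero (hp0 : p ≠ 0) {k n : ℕ} (h : k < n) : qp (p ^ (-k : ℤ)) p n = 0 :=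
  Finset.prod_eq_zero (Finset.mem_range.2 h) (by simp [hp0])

lemma one_sub_pow_ne_zero (hp : ¬IsOfFinOrder p) {n : ℕ} (hn : n ≠ 0) : 1 - p ^ n ≠ 0 :=
  sub_ne_zero.2 fun h => hp (isOfFinOrder_iff_pow_eq_one.2 ⟨n, hn.bot_lt, h.symm⟩)

lemma pow_sub_pow_ne_zero (hp0 : p ≠ 0) (hp : ¬IsOfFinOrder p) {i n : ℕ} (h : i < n) :
    p ^ i - p ^ n ≠ 0 := by
  obtain ⟨d, rfl⟩ := Nat.exists_eq_add_of_lt h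
  rw [show p ^ i - p ^ (i + d + 1) = p ^ i * (1 - p ^ (d + 1)) by ring]
  exact mul_ne_zero (pow_ne_zero _ hp0) (one_sub_pow_ne_zero hp d.succ_ne_zero)

lemma qp_self_ne_zero (hp : ¬IsOfFinOrder p) (n : ℕ) : qp p p n ≠ 0 :=
  Finset.prod_ne_zero_iff.2 fun j _ => by
    rw [← pow_succ']; exact one_sub_pow_ne_zero hp j.succ_ne_zero

lemma qp_pow_succ (hp : ¬IsOfFinOrder p) (a n : ℕ) :
    qp (p ^ (a + 1)) p n = qp p p (a + n) / qp p p a := by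
  rw [eq_div_iff (qp_self_ne_zero hp a), mul_comm, qp_self_mul_qp]

lemma qp_pow_neg_ne_zero (hp0 : p ≠ 0) (hp : ¬IsOfFinOrder p) {k n : ℕ} (h : n ≤ k) :
    qp (p ^ (-k : ℤ)) p n ≠ 0 :=
  Finset.prod_ne_zero_iff.2 fun i hi => by
    have hlt : i < k := (Finset.mem_range.1 hi).trans_le h
    rw [_root_.zpow_neg, zpow_natCast, inv_mul_eq_div, one_sub_div (pow_ne_zero k hp0)]
    exact div_ne_zero (sub_ne_zero.2 (sub_ne_zero.1 (pow_sub_pow_ne_zero hp0 hp hlt)).symm)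
      (pow_ne_zero k hp0)

lemma qp_sq_zpow_neg {q : ℂ} (hq0 : q ≠ 0) (hq : ¬IsOfFinOrder (q ^ 2)) {k n : ℕ} (h : n ≤ k) :
    qp (q ^ (-(2 * k) : ℤ)) (q ^ 2) n =
      (-1) ^ n * q ^ (n * (n - 1 - 2 * k) : ℤ) *
        (qp (q ^ 2) (q ^ 2) k / qp (q ^ 2) (q ^ 2) (k - n)) := by
  induction n with
  | zero => simp [div_self (qp_self_ne_zero hq k)]
  | succ n ih =>
    obtain ⟨d, rfl⟩ := Nat.exists_eq_add_of_le h
    have hd : (1 : ℂ) - q ^ (-(2 * (n + 1 + d : ℕ)) : ℤ) * (q ^ 2) ^ n =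
        -q ^ (-(2 * (d + 1)) : ℤ) * (1 - (q ^ 2) ^ (d + 1)) := by
      rw [neg_mul, mul_one_sub, ← pow_mul, ← pow_mul, ← zpow_natCast, ← zpow_natCast,
        ← zpow_add₀ hq0, ← zpow_add₀ hq0]
      push_cast
      ring_nf
      simp only [zpow_zero]
      ring
    have hexp : q ^ (((n + 1 : ℕ) : ℤ) * ((n + 1 : ℕ) - 1 - 2 * (n + 1 + d : ℕ))) =
        q ^ (n * (n - 1 - 2 * (n + 1 + d : ℕ)) : ℤ) * q ^ (-(2 * (d + 1)) : ℤ) := by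
      rw [← zpow_add₀ hq0]; push_cast; ring_nf
    have hne := one_sub_pow_ne_zero hq d.succ_ne_zero
    have hqd := qp_self_ne_zero hq d
    rw [qp_succ, ih (by omega), hd, hexp, show n + 1 + d - n = d + 1 by omega,
      show n + 1 + d - (n + 1) = d by omega, qp_self_succ (q ^ 2) d]
    rw [mul_div_assoc']
    field_simp
    ring

end QFactorial

/-! ### Contiguous relations for q-Racah sums -/

section Racah

/-- The factor `(p^{-k}, p^{k+1}; p)_s / (p; p)_s²` common to all q-Racah sums of degree `k`. -/
def racahCoeff (p : ℂ) (k s : ℕ) : ℂ :=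
  qp (p ^ (-k : ℤ)) p s * qp (p ^ (k + 1)) p s / qp p p s ^ 2

/-- The basic hypergeometric sum `₄φ₃(p^{-k}, p^{k+1}, a, b; p, c, d; p, p)`. -/
def racahSum (p : ℂ) (k : ℕ) (a b c d : ℂ) : ℂ :=
  ∑ s ∈ range (k + 1), racahCoeff p k s * p ^ s * (qp a p s * qp b p s / (qp c p s * qp d p s))

variable {p : ℂ}

@[simp] lemma racahCoeff_zero (p : ℂ) (k : ℕ) : racahCoeff p k 0 = 1 := by simp [racahCoeff]

lemma racahCoeff_eq_zero (hp0 : p ≠ 0) {k s : ℕ} (h : k < s) : racahCoeff p k s = 0 := by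
  rw [racahCoeff, qp_pow_neg_eq_zero hp0 h, zero_mul, zero_div]

lemma qp_mul_qp_div_sq_succ (hp : ¬IsOfFinOrder p) (a b : ℂ) (s : ℕ) :
    qp a p (s + 1) * qp b p (s + 1) / qp p p (s + 1) ^ 2 * (1 - p ^ (s + 1)) ^ 2 =
      qp a p s * qp b p s / qp p p s ^ 2 * ((1 - a * p ^ s) * (1 - b * p ^ s)) := by
  have h₁ := qp_self_ne_zero hp s
  have h₂ := one_sub_pow_ne_zero hp s.succ_ne_zero
  rw [qp_succ, qp_succ, qp_self_succ]
  field_simp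

lemma racahCoeff_succ (hp : ¬IsOfFinOrder p) (k s : ℕ) :
    racahCoeff p k (s + 1) * (1 - p ^ (s + 1)) ^ 2 =
      racahCoeff p k s * ((1 - p ^ (-k : ℤ) * p ^ s) * (1 - p ^ (k + 1) * p ^ s)) :=
  qp_mul_qp_div_sq_succ hp _ _ s

lemma racahSum_lower {k : ℕ} {a b c d ν δ : ℂ} (hc : c = ν * a)
    (hb : p * b = a * ν * δ) (hc1 : 1 - c ≠ 0) (hpc : qp (p * c) p k ≠ 0) :
    (1 - c) * (p - δ * ν) * racahSum p k a b c d =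
      p * (1 - ν) * (1 - b) * racahSum p k a (p * b) (p * c) d +
        ν * (p - δ) * (1 - a) * racahSum p k (p * a) b (p * c) d := by
  simp only [racahSum, Finset.mul_sum, ← Finset.sum_add_distrib]
  refine Finset.sum_congr rfl fun s hs => ?_
  have hC' : qp (p * c) p s ≠ 0 := qp_ne_zero_of_le hpc (Nat.lt_succ_iff.1 (mem_range.1 hs))
  have hA := qp_mul_one_sub a p s
  have hB := qp_mul_one_sub b p s
  have hC := qp_mul_one_sub c p s
  have hprod : qp c p s * (1 - c * p ^ s) ≠ 0 := hC ▸ mul_ne_zero hC' hc1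
  have hC0 : qp c p s ≠ 0 := left_ne_zero_of_mul hprod
  have hkey : (p - δ * ν) * (1 - c * p ^ s) =
      p * (1 - ν) * (1 - b * p ^ s) + ν * (p - δ) * (1 - a * p ^ s) := by
    rw [hc]; linear_combination p ^ s * (1 - ν) * hb
  have hquot : (1 - c) * (p - δ * ν) * (qp a p s * qp b p s / qp c p s) =
      p * (1 - ν) * (1 - b) * (qp a p s * qp (p * b) p s / qp (p * c) p s) +
        ν * (p - δ) * (1 - a) * (qp (p * a) p s * qp b p s / qp (p * c) p s) := by
    rw [mul_div_assoc', mul_div_assoc', mul_div_assoc', ← add_div, div_eq_div_iff hC0 hC']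
    linear_combination (p - δ * ν) * qp a p s * qp b p s * hC +
      qp a p s * qp b p s * qp c p s * hkey -
      p * (1 - ν) * qp a p s * qp c p s * hB - ν * (p - δ) * qp b p s * qp c p s * hA
  simp only [← div_div]
  linear_combination (racahCoeff p k s * p ^ s / qp d p s) * hquot

/-- The telescoping potential in the proof of `racahSum_raise`. -/
def racahPotential (p : ℂ) (k : ℕ) (a b c d : ℂ) (s : ℕ) : ℂ :=
  c * (racahCoeff p k (s + 1) * (1 - p ^ (s + 1)) ^ 2) *
    (qp (p * a) p s * qp (p * b) p s / (qp (p * c) p s * qp d p s))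

lemma racahSum_raise_split (hp0 : p ≠ 0) (hp : ¬IsOfFinOrder p) {k s : ℕ} {a b c d : ℂ}
    (hck : qp c p k ≠ 0) (hck' : 1 - c * p ^ k ≠ 0 ∨ qp (p * a) p k = 0)
    (hs : s ≤ k) :
    (c - p ^ (-k : ℤ)) * (c - p ^ (k + 1)) * (racahCoeff p k s * p ^ s *
        (qp (p * a) p s * qp (p * b) p s / (qp (p * c) p s * qp d p s))) =
      racahPotential p k a b c d s - (1 - c) * racahCoeff p k s * (c - p * p ^ s) *
        (qp (p * a) p s * qp (p * b) p s / (qp c p s * qp d p s)) := by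
  rw [racahPotential, racahCoeff_succ hp]
  rcases eq_or_ne (qp (p * a) p s) 0 with ha | ha
  · simp [ha]
  have hne : 1 - c * p ^ s ≠ 0 := by
    rcases hs.lt_or_eq with h | rfl
    · exact right_ne_zero_of_mul (qp_succ c p s ▸ qp_ne_zero_of_le hck h)
    · exact hck'.resolve_right ha
  have hcs := qp_ne_zero_of_le hck hs
  have hprod := qp_mul_one_sub c p s
  have hpcs : qp (p * c) p s ≠ 0 := left_ne_zero_of_mul (hprod ▸ mul_ne_zero hcs hne)
  have hquot : (1 - c) / qp c p s = (1 - c * p ^ s) / qp (p * c) p s := by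
    rw [div_eq_div_iff hcs hpcs, mul_comm, hprod, mul_comm]
  have hpp : p ^ (-k : ℤ) * p ^ (k + 1) = p := by
    rw [_root_.zpow_neg, zpow_natCast, pow_succ, inv_mul_cancel_left₀ (pow_ne_zero k hp0)]
  have hkey : (c - p ^ (-k : ℤ)) * (c - p ^ (k + 1)) * p ^ s =
      c * ((1 - p ^ (-k : ℤ) * p ^ s) * (1 - p ^ (k + 1) * p ^ s)) -
        (1 - c * p ^ s) * (c - p * p ^ s) := by
    linear_combination (p ^ s - c * (p ^ s) ^ 2) * hpp
  simp only [← div_div]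
  linear_combination
    racahCoeff p k s * (qp (p * a) p s * qp (p * b) p s / qp (p * c) p s / qp d p s) * hkey +
    racahCoeff p k s * (c - p * p ^ s) * (qp (p * a) p s * qp (p * b) p s / qp d p s) * hquot

lemma racahSum_raise_step {k s : ℕ} {a b c d ν δ : ℂ} (hc : c = ν * a) (hd : d = p * δ * a)
    (hb : p * b = a * ν * δ) (hc1 : 1 - c ≠ 0) (hcs : qp c p (s + 1) ≠ 0)
    (hds : qp d p (s + 1) ≠ 0) :
    p * (1 - c) * (racahCoeff p k (s + 1) * p ^ (s + 1) *
      ((p - ν) * (1 - b) * (qp (p * a) p (s + 1) * qp b p (s + 1)) +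
      ν * (1 - δ) * (1 - a) * (qp a p (s + 1) * qp (p * b) p (s + 1))) /
        (qp c p (s + 1) * qp d p (s + 1))) =
    (p - δ * ν) * racahPotential p k a b c d s -
      (p - δ * ν) * (1 - c) * racahCoeff p k (s + 1) * (c - p * p ^ (s + 1)) *
        (qp (p * a) p (s + 1) * qp (p * b) p (s + 1) / (qp c p (s + 1) * qp d p (s + 1))) := by
  have hpc : qp (p * c) p s = qp c p (s + 1) / (1 - c) := by
    rw [qp_succ', mul_div_cancel_left₀ _ hc1]
  have hdd : qp d p s = qp d p (s + 1) / (1 - d * p ^ s) := by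
    rw [qp_succ, mul_div_cancel_right₀ _ (right_ne_zero_of_mul (qp_succ d p s ▸ hds))]
  have hkey : (p - δ * ν) * c * (1 - p ^ (s + 1)) ^ 2 * (1 - d * p ^ s) -
      (p - δ * ν) * (c - p * p ^ (s + 1)) * (1 - p * a * p ^ s) * (1 - p * b * p ^ s) =
      p * p ^ (s + 1) * ((p - ν) * (1 - b) ^ 2 * (1 - p * a * p ^ s) +
        ν * (1 - δ) * (1 - a) ^ 2 * (1 - p * b * p ^ s)) := by
    rw [hb, hc, hd]
    linear_combination
      (p - ν) * (1 - p * a * p ^ s) * p ^ s * (2 * p - p * b - a * ν * δ) * hb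
  rw [racahPotential, hpc, hdd, qp_succ' a, qp_succ' b, qp_succ (p * a), qp_succ (p * b)]
  field_simp
  linear_combination -racahCoeff p k (s + 1) * qp (p * a) p s * qp (p * b) p s * hkey

lemma racahPotential_self (hp0 : p ≠ 0) (k : ℕ) (a b c d : ℂ) :
    racahPotential p k a b c d k = 0 := by
  simp [racahPotential, racahCoeff_eq_zero hp0 k.lt_succ_self]

lemma racahSum_raise (hp0 : p ≠ 0) (hp : ¬IsOfFinOrder p) {k : ℕ} {a b c d ν δ : ℂ}
    (hc : c = ν * a) (hd : d = p * δ * a) (hb : p * b = a * ν * δ) (hc1 : 1 - c ≠ 0)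
    (hck : qp c p k ≠ 0) (hck' : 1 - c * p ^ k ≠ 0 ∨ qp (p * a) p k = 0) (hdk : qp d p k ≠ 0) :
    (c - p ^ (-k : ℤ)) * (c - p ^ (k + 1)) * (p - δ * ν) * racahSum p k (p * a) (p * b) (p * c) d =
      p * (1 - c) * ((p - ν) * (1 - b) * racahSum p k (p * a) b c d +
        ν * (1 - δ) * (1 - a) * racahSum p k a (p * b) c d) := by
  let H (s : ℕ) : ℂ := (p - δ * ν) * (1 - c) * racahCoeff p k s * (c - p * p ^ s) *
    (qp (p * a) p s * qp (p * b) p s / (qp c p s * qp d p s))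
  let R (s : ℕ) : ℂ := p * (1 - c) * (racahCoeff p k s * p ^ s *
    ((p - ν) * (1 - b) * (qp (p * a) p s * qp b p s) +
      ν * (1 - δ) * (1 - a) * (qp a p s * qp (p * b) p s)) / (qp c p s * qp d p s))
  have hleft : (c - p ^ (-k : ℤ)) * (c - p ^ (k + 1)) * (p - δ * ν) *
      racahSum p k (p * a) (p * b) (p * c) d =
      ∑ s ∈ range (k + 1), ((p - δ * ν) * racahPotential p k a b c d s - H s) := by
    rw [racahSum, Finset.mul_sum]
    refine Finset.sum_congr rfl fun s hs => ?_
    linear_combination (p - δ * ν) *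
      racahSum_raise_split (d := d) (b := b) hp0 hp hck hck' (Nat.lt_succ_iff.1 (mem_range.1 hs))
  have hright : p * (1 - c) * ((p - ν) * (1 - b) * racahSum p k (p * a) b c d +
      ν * (1 - δ) * (1 - a) * racahSum p k a (p * b) c d) = ∑ s ∈ range (k + 1), R s := by
    simp only [racahSum, Finset.mul_sum, ← Finset.sum_add_distrib]
    exact Finset.sum_congr rfl fun s _ => by ring
  have hzero : R 0 = -H 0 := by
    simp only [R, H, qp_zero, racahCoeff_zero, pow_zero]
    linear_combination (1 - c) * (p - ν) * (-hb) + (1 - c) * (p - ν * δ) * hc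
  have hsucc : ∀ s ∈ range k,
      R (s + 1) = (p - δ * ν) * racahPotential p k a b c d s - H (s + 1) := fun s hs =>
    racahSum_raise_step hc hd hb hc1 (qp_ne_zero_of_le hck (mem_range.1 hs))
      (qp_ne_zero_of_le hdk (mem_range.1 hs))
  rw [hleft, hright, Finset.sum_sub_distrib, Finset.sum_range_succ (fun s => _ * _),
    racahPotential_self hp0, Finset.sum_range_succ' H, Finset.sum_range_succ' R,
    Finset.sum_congr rfl hsucc, Finset.sum_sub_distrib, hzero]
  ring

end Racah

section RacahValue

variable {p : ℂ} {L k n j : ℕ}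

/-- The q-Racah value `R_k(μ(j); 1, 1, p^{-n-j-1}, p^{-L-1}; p)` entering `P_n`, written with the
redundant summation bound `k` in place of `min k j`. -/
def racahValue (p : ℂ) (L k n j : ℕ) : ℂ :=
  racahSum p k (p ^ (-j : ℤ)) (p ^ (-(n + L + 1 : ℕ) : ℤ)) (p ^ (-(n + j : ℕ) : ℤ)) (p ^ (-L : ℤ))

lemma mul_zpow_neg_succ (hp0 : p ≠ 0) (n : ℕ) : p * p ^ (-(n + 1 : ℕ) : ℤ) = p ^ (-n : ℤ) := by
  rw [← zpow_one_add₀ hp0]; congr 1; push_cast; ring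

lemma mul_zpow_neg_pred (hp0 : p ≠ 0) (hn : n ≠ 0) :
    p * p ^ (-n : ℤ) = p ^ (-(n - 1 : ℕ) : ℤ) := by
  obtain ⟨n, rfl⟩ := Nat.exists_eq_succ_of_ne_zero hn
  exact mul_zpow_neg_succ hp0 n

lemma one_sub_zpow_neg_ne_zero (hp : ¬IsOfFinOrder p) (hn : n ≠ 0) :
    1 - p ^ (-n : ℤ) ≠ 0 := by
  rw [_root_.zpow_neg, zpow_natCast, sub_ne_zero, ne_comm, inv_ne_one]
  exact fun h => one_sub_pow_ne_zero hp hn (sub_eq_zero.2 h.symm)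

lemma racahValue_raise (hp0 : p ≠ 0) (hp : ¬IsOfFinOrder p) (hj : j ≤ L) (hk : k ≤ L)
    (hkn : k ≤ n + j + 1) :
    (1 - p ^ (n + j + 1) * p ^ (-k : ℤ)) * (1 - p ^ (n + j + k + 2)) * (1 - p ^ (L - j + n + 1)) *
        racahValue p L k n j =
      (1 - p ^ (n + j + 1)) * ((1 - p ^ (n + 1)) * (1 - p ^ (n + L + 2)) *
        racahValue p L k (n + 1) j +
        p ^ (n + 1) * (1 - p ^ (j + 1)) * (1 - p ^ (L - j)) * racahValue p L k n (j + 1)) := by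
  obtain ⟨d, rfl⟩ := Nat.exists_eq_add_of_le hj
  have h := racahSum_raise (k := k) (a := p ^ (-(j + 1 : ℕ) : ℤ))
    (b := p ^ (-(n + (j + d) + 1 + 1 : ℕ) : ℤ)) (c := p ^ (-(n + j + 1 : ℕ) : ℤ))
    (d := p ^ (-(j + d : ℕ) : ℤ)) (ν := p ^ (-n : ℤ)) (δ := p ^ (-d : ℤ)) hp0 hp
    (by rw [← zpow_add₀ hp0]; congr 1; push_cast; ring)
    (by rw [mul_right_comm, mul_zpow_neg_succ hp0, ← zpow_add₀ hp0]; congr 1; push_cast; ring)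
    (by rw [mul_zpow_neg_succ hp0, ← zpow_add₀ hp0, ← zpow_add₀ hp0]; congr 1; push_cast; ring)
    (one_sub_zpow_neg_ne_zero hp (n + j).succ_ne_zero) (qp_pow_neg_ne_zero hp0 hp hkn)
    (by
      rcases hkn.lt_or_eq with h | h
      · exact .inl (right_ne_zero_of_mul (qp_succ _ p k ▸ qp_pow_neg_ne_zero hp0 hp h))
      · rw [mul_zpow_neg_succ hp0]; exact .inr (qp_pow_neg_eq_zero hp0 (by omega)))
    (qp_pow_neg_ne_zero hp0 hp hk)
  simp only [mul_zpow_neg_succ hp0] at h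
  simp only [racahValue, show n + 1 + (j + d) + 1 = n + (j + d) + 1 + 1 by ring,
    show n + 1 + j = n + j + 1 by ring, ← add_assoc n j 1, Nat.add_sub_cancel_left]
  generalize racahSum p k _ _ _ _ = F₀ at h ⊢
  generalize racahSum p k _ _ _ _ = F₁ at h ⊢
  generalize racahSum p k _ _ _ _ = F₂ at h ⊢
  simp only [_root_.zpow_neg, zpow_natCast, pow_add, pow_one] at h ⊢
  field_simp at h ⊢
  linear_combination -h

lemma racahValue_lower (hp0 : p ≠ 0) (hp : ¬IsOfFinOrder p) (hj : j ≤ L) (hkn : k + 1 ≤ n + j) :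
    (1 - p ^ (n + j)) * (1 - p ^ (L - j + n + 1)) * racahValue p L k n j =
      (1 - p ^ n) * (1 - p ^ (n + L + 1)) * racahValue p L k (n - 1) j +
        p ^ n * (1 - p ^ (L - j + 1)) * (1 - p ^ j) * racahValue p L k n (j - 1) := by
  obtain ⟨d, rfl⟩ := Nat.exists_eq_add_of_le hj
  have h := racahSum_lower (k := k) (a := p ^ (-j : ℤ)) (b := p ^ (-(n + (j + d) + 1 : ℕ) : ℤ))
    (c := p ^ (-(n + j : ℕ) : ℤ)) (d := p ^ (-(j + d : ℕ) : ℤ)) (ν := p ^ (-n : ℤ))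
    (δ := p ^ (-d : ℤ))
    (by rw [← zpow_add₀ hp0]; congr 1; push_cast; ring)
    (by rw [mul_zpow_neg_succ hp0, ← zpow_add₀ hp0, ← zpow_add₀ hp0]; congr 1; push_cast; ring)
    (one_sub_zpow_neg_ne_zero hp (by omega))
    (by rw [mul_zpow_neg_pred hp0 (by omega)]; exact qp_pow_neg_ne_zero hp0 hp (by omega))
  rw [mul_zpow_neg_succ hp0, mul_zpow_neg_pred hp0 (n := n + j) (by omega)] at h
  change _ * racahValue p (j + d) k n j = _ at h
  have hn : (1 - p ^ n) * racahValue p (j + d) k (n - 1) j = (1 - p ^ n) *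
      racahSum p k (p ^ (-j : ℤ)) (p ^ (-(n + (j + d) : ℕ) : ℤ)) (p ^ (-(n + j - 1 : ℕ) : ℤ))
        (p ^ (-(j + d : ℕ) : ℤ)) := by
    rcases n with _ | n
    · simp
    · rw [racahValue, Nat.add_sub_cancel, show n + 1 + (j + d) = n + (j + d) + 1 by ring,
        show n + 1 + j - 1 = n + j by omega]
  have hj' : (1 - p ^ j) * racahValue p (j + d) k n (j - 1) = (1 - p ^ j) *
      racahSum p k (p * p ^ (-j : ℤ)) (p ^ (-(n + (j + d) + 1 : ℕ) : ℤ))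
        (p ^ (-(n + j - 1 : ℕ) : ℤ)) (p ^ (-(j + d : ℕ) : ℤ)) := by
    rcases j with _ | j
    · simp
    · rw [racahValue, Nat.add_sub_cancel, mul_zpow_neg_succ hp0]; rfl
  rw [Nat.add_sub_cancel_left]
  generalize racahSum p k _ _ _ _ = F₁ at h hn
  generalize racahSum p k _ _ _ _ = F₂ at h hj'
  have h' : (1 - p ^ (n + j)) * (1 - p ^ (d + n + 1)) * racahValue p (j + d) k n j =
      (1 - p ^ n) * (1 - p ^ (n + (j + d) + 1)) * F₁ +
        p ^ n * (1 - p ^ (d + 1)) * (1 - p ^ j) * F₂ := by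
    generalize racahValue p (j + d) k n j = F₀ at h ⊢
    simp only [_root_.zpow_neg, zpow_natCast, pow_add, pow_one] at h ⊢
    field_simp at h ⊢
    linear_combination h
  linear_combination h' - (1 - p ^ (n + (j + d) + 1)) * hn - p ^ n * (1 - p ^ (d + 1)) * hj'

end RacahValue

/-! ### Evaluation of the q-Racah value at `n = 0` -/

section RacahPoleSum

variable {p : ℂ}

/-- The partial-fraction sum to which a q-Racah sum collapses when `a = c` and `d = p b`. -/
def racahPoleSum (p : ℂ) (k : ℕ) (b : ℂ) : ℂ :=
  ∑ s ∈ range (k + 1), racahCoeff p k s * p ^ s * ((1 - b) / (1 - b * p ^ s))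

lemma sum_qp_inv_mul_qp_eq_zero (hp0 : p ≠ 0) (hp : ¬IsOfFinOrder p) (k : ℕ) :
    ∑ s ∈ range (k + 2), qp (p ^ (-(k + 1 : ℕ) : ℤ)) p s * qp (p ^ (k + 1)) p s / qp p p s ^ 2 *
      p ^ s = 0 := by
  set ψ : ℕ → ℂ := fun s =>
    qp (p ^ (-(k + 1 : ℕ) : ℤ)) p s * qp (p ^ (k + 1)) p s / qp p p s ^ 2 with hψ
  set K : ℂ := p ^ (k + 1)
  have hK0 : K ≠ 0 := pow_ne_zero _ hp0
  have hK1 : 1 - K ≠ 0 := one_sub_pow_ne_zero hp k.succ_ne_zero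
  have hdiff (s : ℕ) : ψ (s + 1) * (1 - p ^ (s + 1)) ^ 2 - ψ s * (1 - p ^ s) ^ 2 =
      -((1 - K) ^ 2 * K⁻¹) * (ψ s * p ^ s) := by
    have hstep : ψ (s + 1) * (1 - p ^ (s + 1)) ^ 2 =
        ψ s * ((1 - K⁻¹ * p ^ s) * (1 - K * p ^ s)) := by
      rw [hψ, qp_mul_qp_div_sq_succ hp, _root_.zpow_neg, zpow_natCast]
    rw [hstep]
    field_simp
    ring
  have hend : ψ (k + 2) = 0 := by
    rw [hψ]; simp only [qp_pow_neg_eq_zero hp0 (k + 1).lt_succ_self, zero_mul, zero_div]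
  have htele := Finset.sum_range_sub (fun s => ψ s * (1 - p ^ s) ^ 2) (k + 2)
  simp only [hdiff, ← Finset.mul_sum, hend, pow_zero, sub_self, zero_mul, mul_zero, ne_eq,
    OfNat.ofNat_ne_zero, not_false_eq_true, zero_pow] at htele
  refine (mul_eq_zero.1 htele).resolve_left ?_
  exact neg_ne_zero.2 (mul_ne_zero (pow_ne_zero 2 hK1) (inv_ne_zero hK0))

lemma racahPoleSum_succ (hp0 : p ≠ 0) (hp : ¬IsOfFinOrder p) (k : ℕ) {b : ℂ}
    (hb : ∀ s ≤ k + 1, 1 - b * p ^ s ≠ 0) :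
    (1 - b * p ^ (k + 1)) * racahPoleSum p (k + 1) b = (b - p ^ (k + 1)) * racahPoleSum p k b := by
  set ψ : ℕ → ℂ := fun s =>
    qp (p ^ (-(k + 1 : ℕ) : ℤ)) p s * qp (p ^ (k + 1)) p s / qp p p s ^ 2 with hψ
  set K : ℂ := p ^ (k + 1) with hK
  have hK0 : K ≠ 0 := pow_ne_zero _ hp0
  have hK1 : 1 - K ≠ 0 := one_sub_pow_ne_zero hp k.succ_ne_zero
  have hupper (s : ℕ) : racahCoeff p (k + 1) s * (1 - K) = ψ s * (1 - K * p ^ s) := by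
    rw [hψ, racahCoeff, pow_succ' p (k + 1), ← hK]
    linear_combination qp (p ^ (-(k + 1 : ℕ) : ℤ)) p s / qp p p s ^ 2 * qp_mul_one_sub K p s
  have hlower (s : ℕ) : racahCoeff p k s * (1 - K) = ψ s * (p ^ s - K) := by
    have h := qp_mul_one_sub (p ^ (-(k + 1 : ℕ) : ℤ)) p s
    rw [mul_zpow_neg_succ hp0] at h
    have hKinv : p ^ (-(k + 1 : ℕ) : ℤ) * K = 1 := by
      rw [_root_.zpow_neg, zpow_natCast, inv_mul_cancel₀ hK0]
    rw [hψ, racahCoeff, ← hK]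
    generalize p ^ (-(k + 1 : ℕ) : ℤ) = M at h hKinv ⊢
    linear_combination -(K * (qp K p s / qp p p s ^ 2)) * h +
      (qp K p s / qp p p s ^ 2) * (qp M p s * p ^ s - qp (p ^ (-k : ℤ)) p s) * hKinv
  have hsum : racahPoleSum p k b =
      ∑ s ∈ range (k + 2), racahCoeff p k s * p ^ s * ((1 - b) / (1 - b * p ^ s)) := by
    rw [Finset.sum_range_succ, racahCoeff_eq_zero hp0 k.lt_succ_self, zero_mul, zero_mul, add_zero,
      racahPoleSum]
  have hzero : ∑ s ∈ range (k + 2), ψ s * p ^ s = 0 := sum_qp_inv_mul_qp_eq_zero hp0 hp k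
  refine mul_right_cancel₀ hK1 (sub_eq_zero.1 ?_)
  rw [hsum, racahPoleSum, ← mul_zero ((1 - b) * (1 - K ^ 2)), ← hzero]
  simp only [Finset.mul_sum, Finset.sum_mul, ← Finset.sum_sub_distrib]
  refine Finset.sum_congr rfl fun s hs => ?_
  have hquot := div_mul_cancel₀ (1 - b) (hb s (Nat.lt_succ_iff.1 (mem_range.1 hs)))
  generalize (1 - b) / (1 - b * p ^ s) = Q at hquot ⊢
  linear_combination (1 - b * K) * p ^ s * Q * hupper s - (b - K) * p ^ s * Q * hlower s +
    ψ s * p ^ s * (1 - K ^ 2) * hquot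

lemma racahValue_zero (hp0 : p ≠ 0) (hp : ¬IsOfFinOrder p) {L k j : ℕ} (hk : k ≤ L) (hj : k ≤ j) :
    racahValue p L k 0 j = racahPoleSum p k (p ^ (-(L + 1 : ℕ) : ℤ)) := by
  rw [racahValue, racahSum, racahPoleSum]
  refine Finset.sum_congr rfl fun s hs => ?_
  have hs : s ≤ k := Nat.lt_succ_iff.1 (mem_range.1 hs)
  have hqj := qp_pow_neg_ne_zero hp0 hp (hs.trans hj)
  have hqL := qp_pow_neg_ne_zero hp0 hp (hs.trans hk)
  have hqb : qp (p ^ (-(L + 1 : ℕ) : ℤ)) p (s + 1) ≠ 0 := qp_pow_neg_ne_zero hp0 hp (by omega)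
  have hshift := qp_mul_one_sub (p ^ (-(L + 1 : ℕ) : ℤ)) p s
  rw [mul_zpow_neg_succ hp0] at hshift
  rw [zero_add, zero_add, mul_div_mul_left _ _ hqj]
  congr 1
  rw [div_eq_div_iff hqL (right_ne_zero_of_mul (qp_succ _ p s ▸ hqb)), ← hshift, mul_comm]

/-- The inverse of `racahValue p L k 0 j` for `k ≤ j`, at base `p = q²`. -/
def racahNorm (q : ℂ) (L k : ℕ) : ℂ :=
  (-1) ^ k * q ^ (k * (k + 1)) * qp (q ^ 2) (q ^ 2) L * qp (q ^ 2) (q ^ 2) (L + 1) /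
    (qp (q ^ 2) (q ^ 2) (L - k) * qp (q ^ 2) (q ^ 2) (L + k + 1))

variable {q : ℂ}

lemma racahNorm_succ (hq : ¬IsOfFinOrder (q ^ 2)) {L k : ℕ} (hk : k < L) :
    racahNorm q L (k + 1) * (1 - (q ^ 2) ^ (L + k + 2)) =
      racahNorm q L k * ((q ^ 2) ^ (L + 1) - (q ^ 2) ^ (k + 1)) := by
  obtain ⟨d, rfl⟩ := Nat.exists_eq_add_of_lt hk
  have hd := qp_self_ne_zero hq d
  have hs := qp_self_ne_zero hq (k + d + 1 + k + 1)
  have hd' := one_sub_pow_ne_zero hq d.succ_ne_zero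
  have hs' := one_sub_pow_ne_zero hq (k + d + 1 + k + 1).succ_ne_zero
  rw [racahNorm, racahNorm, show k + d + 1 - (k + 1) = d by omega,
    show k + d + 1 - k = d + 1 by omega, qp_self_succ _ d,
    show k + d + 1 + (k + 1) + 1 = (k + d + 1 + k + 1) + 1 by ring, qp_self_succ _ (_ + k + 1)]
  field_simp
  ring

lemma racahNorm_mul_racahPoleSum (hq0 : q ≠ 0) (hq : ¬IsOfFinOrder (q ^ 2)) {L k : ℕ}
    (hk : k ≤ L) :
    racahNorm q L k * racahPoleSum (q ^ 2) k ((q ^ 2) ^ (-(L + 1 : ℕ) : ℤ)) = 1 := by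
  have hp0 : q ^ 2 ≠ 0 := pow_ne_zero 2 hq0
  set b : ℂ := (q ^ 2) ^ (-(L + 1 : ℕ) : ℤ) with hb
  have hbL : (q ^ 2) ^ (L + 1) * b = 1 := by
    rw [hb, _root_.zpow_neg, zpow_natCast, mul_inv_cancel₀ (pow_ne_zero _ hp0)]
  induction k with
  | zero =>
    have hb1 : 1 - b ≠ 0 := one_sub_zpow_neg_ne_zero hq L.succ_ne_zero
    simp [racahPoleSum, racahNorm, qp_self_ne_zero hq, hb1]
  | succ k ih =>
    have hb' : ∀ s ≤ k + 1, 1 - b * (q ^ 2) ^ s ≠ 0 := fun s hs =>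
      right_ne_zero_of_mul (qp_succ b (q ^ 2) s ▸ qp_pow_neg_ne_zero hp0 hq (by omega))
    have hsum := racahPoleSum_succ hp0 hq k hb'
    have hnorm := racahNorm_succ hq hk
    rw [show L + k + 2 = (L + 1) + (k + 1) by ring, pow_add] at hnorm
    have hne : (q ^ 2) ^ (L + 1) - (q ^ 2) ^ (k + 1) ≠ 0 := by
      rw [← neg_sub, neg_ne_zero]; exact pow_sub_pow_ne_zero hp0 hq (by omega)
    refine mul_left_cancel₀ hne ?_
    linear_combination (q ^ 2) ^ (L + 1) * racahNorm q L (k + 1) * hsum +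
      racahPoleSum (q ^ 2) k b * hnorm +
      ((q ^ 2) ^ (L + 1) - (q ^ 2) ^ (k + 1)) * ih (by omega) +
      racahNorm q L (k + 1) * ((q ^ 2) ^ (k + 1) * racahPoleSum (q ^ 2) (k + 1) b +
        racahPoleSum (q ^ 2) k b) * hbL

end RacahPoleSum

/-! ### Continuous q-ultraspherical polynomials -/

section Ultraspherical

variable {C : ℂ → ℂ → ℕ → Polynomial ℂ} {p : ℂ}

/-- The power series `∑ (β;p)_r / (p;p)_r (z t)^r`; its product with the one at `z⁻¹` is the
generating function of the continuous q-ultraspherical polynomials. -/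
def qBinomialSeries (p β z : ℂ) : PowerSeries ℂ :=
  PowerSeries.mk fun r => qp β p r / qp p p r * z ^ r

/-- The value at `x` of the q-ultraspherical polynomial of degree `n`, extended by zero to negative
degrees so that the three-term recurrence has no boundary cases. -/
def ultraEval (C : ℂ → ℂ → ℕ → Polynomial ℂ) (p β x : ℂ) : ℤ → ℂ
  | Int.ofNat n => (C p β n).eval x
  | Int.negSucc _ => 0

@[simp] lemma ultraEval_natCast (β x : ℂ) (n : ℕ) :
    ultraEval C p β x n = (C p β n).eval x := rfl

lemma ultraEval_eq_zero (β x : ℂ) {n : ℤ} (hn : n < 0) : ultraEval C p β x n = 0 := by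
  obtain ⟨m, rfl⟩ := Int.eq_negSucc_of_lt_zero hn
  rfl

lemma exists_ne_zero_and_add_inv_div_two_eq (x : ℂ) : ∃ z : ℂ, z ≠ 0 ∧ (z + z⁻¹) / 2 = x := by
  obtain ⟨w, rfl⟩ := Complex.cos_surjective x
  exact ⟨_, Complex.exp_ne_zero (w * Complex.I), by rw [← Complex.exp_neg, ← neg_mul]; rfl⟩

lemma qBinomialSeries_sub_X_mul (hp : ¬IsOfFinOrder p) (β z : ℂ) :
    qBinomialSeries p β z - PowerSeries.C z * (PowerSeries.X * qBinomialSeries p β z) =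
      PowerSeries.rescale p (qBinomialSeries p β z) -
        PowerSeries.C (β * z) *
          (PowerSeries.X * PowerSeries.rescale p (qBinomialSeries p β z)) := by
  ext n
  cases n with
  | zero =>
    simp only [qBinomialSeries, map_sub, PowerSeries.coeff_C_mul, PowerSeries.coeff_zero_X_mul,
      PowerSeries.coeff_mk, PowerSeries.coeff_rescale, pow_zero, one_mul, mul_zero]
  | succ n =>
    simp only [qBinomialSeries, map_sub, PowerSeries.coeff_C_mul, PowerSeries.coeff_succ_X_mul,
      PowerSeries.coeff_mk, PowerSeries.coeff_rescale]
    have hqp := qp_self_ne_zero hp n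
    have hsub := one_sub_pow_ne_zero hp n.succ_ne_zero
    rw [qp_succ, qp_self_succ]
    field_simp
    ring

lemma IsUltra.eval_eq_coeff (hC : IsUltra C) (β : ℂ) {z : ℂ} (hz : z ≠ 0) (n : ℕ) :
    (C p β n).eval ((z + z⁻¹) / 2) =
      PowerSeries.coeff n (qBinomialSeries p β z⁻¹ * qBinomialSeries p β z) := by
  rw [(hC p β n).2 z hz, PowerSeries.coeff_mul, Finset.Nat.sum_antidiagonal_eq_sum_range_succ_mk]
  refine Finset.sum_congr rfl fun r hr => ?_
  obtain ⟨d, rfl⟩ := Nat.exists_eq_add_of_le (Finset.mem_range_succ_iff.1 hr)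
  have hpow : z ^ (((r + d : ℕ) : ℤ) - 2 * r) = z⁻¹ ^ r * z ^ d := by
    rw [inv_pow, ← zpow_natCast, ← zpow_natCast, ← _root_.zpow_neg, ← zpow_add₀ hz]
    push_cast
    ring_nf
  simp only [qBinomialSeries, PowerSeries.coeff_mk, Nat.add_sub_cancel_left, hpow]
  ring

lemma qBinomialSeries_inv_mul_functional_equation (hp : ¬IsOfFinOrder p) (β : ℂ) {z : ℂ}
    (hz : z ≠ 0) {H : PowerSeries ℂ}
    (hH : H = qBinomialSeries p β z⁻¹ * qBinomialSeries p β z) :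
    H - PowerSeries.C (z + z⁻¹) * (PowerSeries.X * H) + PowerSeries.X * (PowerSeries.X * H) =
      PowerSeries.rescale p H -
        PowerSeries.C (β * (z + z⁻¹)) * (PowerSeries.X * PowerSeries.rescale p H) +
        PowerSeries.C (β ^ 2) *
          (PowerSeries.X * (PowerSeries.X * PowerSeries.rescale p H)) := by
  have hpos := qBinomialSeries_sub_X_mul hp β z
  have hneg := qBinomialSeries_sub_X_mul hp β z⁻¹
  have hzz : PowerSeries.C z * PowerSeries.C z⁻¹ = 1 := by
    rw [← map_mul, mul_inv_cancel₀ hz, map_one]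
  subst hH
  simp only [map_mul, map_add, map_pow] at hpos hneg ⊢
  generalize qBinomialSeries p β z = u at hpos ⊢
  generalize qBinomialSeries p β z⁻¹ = v at hneg ⊢
  generalize (PowerSeries.X : PowerSeries ℂ) = X at hpos hneg ⊢
  linear_combination (v - PowerSeries.C z⁻¹ * X * v) * hpos +
    (PowerSeries.rescale p u - PowerSeries.C β * PowerSeries.C z * X * PowerSeries.rescale p u) *
      hneg +
    (-X ^ 2 * u * v +
      PowerSeries.C β ^ 2 * X ^ 2 * PowerSeries.rescale p u * PowerSeries.rescale p v) * hzz

lemma ultraEval_zero (hC : IsUltra C) (β x : ℂ) : ultraEval C p β x 0 = 1 := by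
  obtain ⟨z, hz, rfl⟩ := exists_ne_zero_and_add_inv_div_two_eq x
  exact (hC.eval_eq_coeff β hz 0).trans (by simp [qBinomialSeries])

lemma ultraEval_recurrence (hC : IsUltra C) (hp : ¬IsOfFinOrder p) (β x : ℂ)
    (n : ℤ) :
    (1 - p ^ (n + 1)) * ultraEval C p β x (n + 1) +
        (1 - β ^ 2 * p ^ (n - 1)) * ultraEval C p β x (n - 1) =
      2 * x * (1 - β * p ^ n) * ultraEval C p β x n := by
  obtain ⟨z, hz, rfl⟩ := exists_ne_zero_and_add_inv_div_two_eq x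
  obtain ⟨H, hH⟩ : ∃ H, H = qBinomialSeries p β z⁻¹ * qBinomialSeries p β z := ⟨_, rfl⟩
  have hcoeff (m : ℕ) : ultraEval C p β ((z + z⁻¹) / 2) m = PowerSeries.coeff m H := by
    rw [ultraEval_natCast, hC.eval_eq_coeff β hz, hH]
  have hfun := qBinomialSeries_inv_mul_functional_equation hp β hz hH
  generalize z + z⁻¹ = w at hcoeff hfun ⊢
  obtain hn | rfl | hn := lt_trichotomy n (-1)
  · simp only [ultraEval_eq_zero β _ (show n < 0 by omega),
      ultraEval_eq_zero β _ (show n + 1 < 0 by omega),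
      ultraEval_eq_zero β _ (show n - 1 < 0 by omega), mul_zero, add_zero]
  · simp [ultraEval_eq_zero]
  · obtain ⟨m, rfl⟩ := Int.eq_ofNat_of_zero_le (show 0 ≤ n by omega)
    have hm := congrArg (PowerSeries.coeff (m + 1)) hfun
    cases m with
    | zero =>
      simp only [map_sub, map_add, PowerSeries.coeff_C_mul, PowerSeries.coeff_succ_X_mul,
        PowerSeries.coeff_rescale, PowerSeries.coeff_zero_X_mul, ← hcoeff] at hm
      simp only [ultraEval_eq_zero β _ (show ((0 : ℕ) : ℤ) - 1 < 0 by norm_num)]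
      push_cast at hm ⊢
      simp only [pow_one, zpow_one, pow_zero, zpow_zero] at hm ⊢
      linear_combination hm
    | succ m =>
      simp only [map_sub, map_add, PowerSeries.coeff_C_mul, PowerSeries.coeff_succ_X_mul,
        PowerSeries.coeff_rescale, ← hcoeff] at hm
      rw [show ((m + 1 : ℕ) : ℤ) + 1 = (m + 1 + 1 : ℕ) by push_cast; ring,
        show ((m + 1 : ℕ) : ℤ) - 1 = m by push_cast; ring]
      simp only [zpow_natCast]
      linear_combination hm

end Ultraspherical

/-! ### The triangular factors -/

section TriangularFactors

variable {C : ℂ → ℂ → ℕ → Polynomial ℂ} {q : ℂ}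

/-- The coefficients of the q-ultraspherical polynomials in `lowerEntry`. -/
def lowerCoeff (q : ℂ) (m k : ℕ) : ℂ :=
  q ^ (m - k : ℤ) * (qp (q ^ 2) (q ^ 2) m * qp (q ^ 2) (q ^ 2) (2 * k + 1) /
    (qp (q ^ 2) (q ^ 2) (m + k + 1) * qp (q ^ 2) (q ^ 2) k))

/-- The coefficients of the q-ultraspherical polynomials in `lowerInvEntry`. -/
def lowerInvCoeff (q : ℂ) (k i : ℕ) : ℂ :=
  q ^ ((2 * k + 1) * (k - i) : ℤ) * (qp (q ^ 2) (q ^ 2) k * qp (q ^ 2) (q ^ 2) (k + i) /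
    (qp (q ^ 2) (q ^ 2) (2 * k) * qp (q ^ 2) (q ^ 2) i))

/-- The entries of the unipotent lower triangular factor `L(x)` of the weight, with indices in `ℕ`
rather than in `Fin (2ℓ + 1)`: they do not depend on `ℓ`. -/
def lowerEntry (C : ℂ → ℂ → ℕ → Polynomial ℂ) (q x : ℂ) (m k : ℕ) : ℂ :=
  lowerCoeff q m k * ultraEval C (q ^ 2) ((q ^ 2) ^ (k + 1)) x (m - k)

/-- The entries of the inverse of `L(x)`, with indices in `ℕ`. -/
def lowerInvEntry (C : ℂ → ℂ → ℕ → Polynomial ℂ) (q x : ℂ) (k i : ℕ) : ℂ :=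
  lowerInvCoeff q k i * ultraEval C (q ^ 2) ((q ^ 2) ^ (-k : ℤ)) x (k - i)

/-- The eigenvalues of the second-order recurrence operator that `L(x)` diagonalises. -/
def lowerEigenvalue (p : ℂ) (k : ℕ) : ℂ := p ^ (-k : ℤ) + p ^ (k + 1)

lemma lowerEntry_eq_zero (x : ℂ) {m k : ℕ} (h : m < k) : lowerEntry C q x m k = 0 := by
  rw [lowerEntry, ultraEval_eq_zero _ _ (by omega), mul_zero]

lemma lowerInvEntry_eq_zero (x : ℂ) {k i : ℕ} (h : k < i) : lowerInvEntry C q x k i = 0 := by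
  rw [lowerInvEntry, ultraEval_eq_zero _ _ (by omega), mul_zero]

lemma lowerEntry_self (hC : IsUltra C) (hq : ¬IsOfFinOrder (q ^ 2)) (x : ℂ) (k : ℕ) :
    lowerEntry C q x k k = 1 := by
  rw [lowerEntry, lowerCoeff, sub_self, ultraEval_zero hC, ← two_mul, zpow_zero, one_mul, mul_one,
    mul_comm (qp _ _ k),
    div_self (mul_ne_zero (qp_self_ne_zero hq (2 * k + 1)) (qp_self_ne_zero hq k))]

lemma lowerInvEntry_self (hC : IsUltra C) (hq : ¬IsOfFinOrder (q ^ 2)) (x : ℂ) (k : ℕ) :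
    lowerInvEntry C q x k k = 1 := by
  rw [lowerInvEntry, lowerInvCoeff, sub_self, ultraEval_zero hC, ← two_mul, mul_zero, zpow_zero,
    one_mul, mul_one, mul_comm (qp _ _ k),
    div_self (mul_ne_zero (qp_self_ne_zero hq (2 * k)) (qp_self_ne_zero hq k))]

lemma lowerEigenvalue_sub {p : ℂ} (hp0 : p ≠ 0) (m k : ℕ) :
    lowerEigenvalue p m - lowerEigenvalue p k =
      (1 - p ^ m * p ^ (-k : ℤ)) * (1 - p ^ (m + k + 1)) / p ^ m := by
  simp only [lowerEigenvalue, _root_.zpow_neg, zpow_natCast]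
  field_simp
  ring

lemma lowerEigenvalue_ne {p : ℂ} (hp0 : p ≠ 0) (hp : ¬IsOfFinOrder p) {m k : ℕ} (h : m ≠ k) :
    lowerEigenvalue p m ≠ lowerEigenvalue p k := by
  wlog hmk : m < k generalizing m k
  · exact (this h.symm (by omega)).symm
  refine sub_ne_zero.1 ?_
  rw [lowerEigenvalue_sub hp0, _root_.zpow_neg, zpow_natCast, ← div_eq_mul_inv,
    one_sub_div (pow_ne_zero k hp0), ← neg_sub, neg_div]
  exact div_ne_zero (mul_ne_zero (neg_ne_zero.2 (div_ne_zero (pow_sub_pow_ne_zero hp0 hp hmk)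
    (pow_ne_zero k hp0))) (one_sub_pow_ne_zero hp (by omega))) (pow_ne_zero m hp0)

lemma lowerCoeff_succ (hq0 : q ≠ 0) (hq : ¬IsOfFinOrder (q ^ 2)) (m k : ℕ) :
    (1 - (q ^ 2) ^ (m + k + 2)) * lowerCoeff q (m + 1) k =
      q * (1 - (q ^ 2) ^ (m + 1)) * lowerCoeff q m k := by
  have hexp : q ^ ((m + 1 : ℕ) - k : ℤ) = q * q ^ (m - k : ℤ) := by
    rw [← zpow_one_add₀ hq0]; push_cast; ring_nf
  have hqp := qp_self_ne_zero hq (m + k + 1)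
  have hsub := one_sub_pow_ne_zero hq (m + k + 1).succ_ne_zero
  rw [lowerCoeff, lowerCoeff, hexp, show m + 1 + k + 1 = m + k + 1 + 1 by ring, qp_self_succ _ m,
    qp_self_succ _ (m + k + 1)]
  field_simp

lemma lowerInvCoeff_succ (hq0 : q ≠ 0) (hq : ¬IsOfFinOrder (q ^ 2)) (k i : ℕ) :
    q ^ (2 * k + 1) * (1 - (q ^ 2) ^ (i + 1)) * lowerInvCoeff q k (i + 1) =
      (1 - (q ^ 2) ^ (k + i + 1)) * lowerInvCoeff q k i := by
  have hexp : q ^ ((2 * k + 1) * (k - i) : ℤ) =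
      q ^ (2 * k + 1) * q ^ ((2 * k + 1) * (k - (i + 1 : ℕ)) : ℤ) := by
    rw [← zpow_natCast, ← zpow_add₀ hq0]; push_cast; ring_nf
  have hqp := qp_self_ne_zero hq i
  have hsub := one_sub_pow_ne_zero hq i.succ_ne_zero
  rw [lowerInvCoeff, lowerInvCoeff, hexp, ← add_assoc, qp_self_succ _ i, qp_self_succ _ (k + i)]
  field_simp

lemma ultraEval_pow_succ_recurrence {p : ℂ} (hC : IsUltra C) (hp0 : p ≠ 0) (hp : ¬IsOfFinOrder p)
    (x : ℂ) (m k : ℕ) :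
    (1 - p ^ (m + 1) * p ^ (-k : ℤ)) * ultraEval C p (p ^ (k + 1)) x (m - k + 1) +
        (1 - p ^ (m + k + 1)) * ultraEval C p (p ^ (k + 1)) x (m - k - 1) =
      2 * x * (1 - p ^ (m + 1)) * ultraEval C p (p ^ (k + 1)) x (m - k) := by
  convert ultraEval_recurrence hC hp (p ^ (k + 1)) x (m - k) using 4 <;>
  · simp only [zpow_sub₀ hp0, zpow_add₀ hp0, zpow_natCast, _root_.zpow_neg, zpow_one]
    field_simp
    try ring

lemma ultraEval_zpow_neg_recurrence {p : ℂ} (hC : IsUltra C) (hp0 : p ≠ 0)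
    (hp : ¬IsOfFinOrder p) (x : ℂ) (k i : ℕ) :
    p ^ (2 * k + 2) * (1 - p ^ i * p ^ (-k : ℤ)) * ultraEval C p (p ^ (-k : ℤ)) x (k - i) +
        (1 - p ^ (k + i + 2)) * ultraEval C p (p ^ (-k : ℤ)) x (k - (i + 2)) =
      2 * x * p ^ (k + 1) * (1 - p ^ (i + 1)) * ultraEval C p (p ^ (-k : ℤ)) x (k - (i + 1)) := by
  have hrec := ultraEval_recurrence hC hp (p ^ (-k : ℤ)) x (k - (i + 1))
  rw [show (k - (i + 1) + 1 : ℤ) = k - i by ring, show (k - (i + 1) - 1 : ℤ) = k - (i + 2) by ring,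
    _root_.zpow_neg, zpow_natCast, zpow_sub₀ hp0, zpow_sub₀ hp0, zpow_sub₀ hp0, zpow_natCast,
    zpow_natCast] at hrec
  have hone : p ^ (i + 1 : ℤ) = p ^ (i + 1) := mod_cast rfl
  have htwo : p ^ (i + 2 : ℤ) = p ^ (i + 2) := mod_cast rfl
  rw [hone, htwo] at hrec
  rw [_root_.zpow_neg, zpow_natCast]
  generalize ultraEval C p (p ^ k)⁻¹ x = c at hrec ⊢
  linear_combination (norm := skip) -p ^ (k + i + 2) * hrec
  field_simp
  ring

lemma lowerEntry_recurrence (hC : IsUltra C) (hq0 : q ≠ 0) (hq : ¬IsOfFinOrder (q ^ 2)) (x : ℂ)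
    (m k : ℕ) :
    2 * x * (1 - (q ^ 2) ^ (m + 1)) ^ 2 * lowerEntry C q x m k =
      (1 - (q ^ 2) ^ (m + 1) * (q ^ 2) ^ (-k : ℤ)) * (1 - (q ^ 2) ^ (m + k + 2)) * q⁻¹ *
          lowerEntry C q x (m + 1) k +
        q * (1 - (q ^ 2) ^ m) * (1 - (q ^ 2) ^ (m + 1)) * lowerEntry C q x (m - 1) k := by
  have hrec := ultraEval_pow_succ_recurrence hC (pow_ne_zero 2 hq0) hq x m k
  have hup : lowerEntry C q x (m + 1) k =
      lowerCoeff q (m + 1) k * ultraEval C (q ^ 2) ((q ^ 2) ^ (k + 1)) x (m - k + 1) := by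
    rw [lowerEntry]; push_cast; ring_nf
  have hlow : q * (1 - (q ^ 2) ^ m) * lowerEntry C q x (m - 1) k =
      (1 - (q ^ 2) ^ (m + k + 1)) * lowerCoeff q m k *
        ultraEval C (q ^ 2) ((q ^ 2) ^ (k + 1)) x (m - k - 1) := by
    cases m with
    | zero => simp [ultraEval_eq_zero _ x (show (-(k : ℤ) - 1) < 0 by omega)]
    | succ m =>
      rw [lowerEntry, ← mul_assoc, show m + 1 + k + 1 = m + k + 2 by ring, lowerCoeff_succ hq0 hq,
        Nat.add_sub_cancel]
      push_cast
      ring_nf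
  rw [hup, lowerEntry]
  linear_combination (norm := skip) (-(1 - (q ^ 2) ^ (m + 1)) * lowerCoeff q m k) * hrec -
    (1 - (q ^ 2) ^ (m + 1)) * hlow - (1 - (q ^ 2) ^ (m + 1) * (q ^ 2) ^ (-k : ℤ)) * q⁻¹ *
      ultraEval C (q ^ 2) ((q ^ 2) ^ (k + 1)) x (m - k + 1) * lowerCoeff_succ hq0 hq m k
  field_simp
  ring

lemma lowerInvEntry_recurrence (hC : IsUltra C) (hq0 : q ≠ 0) (hq : ¬IsOfFinOrder (q ^ 2))
    (x : ℂ) (k i : ℕ) :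
    lowerInvEntry C q x k i * (lowerEigenvalue (q ^ 2) i - lowerEigenvalue (q ^ 2) k) =
      lowerInvEntry C q x k (i + 1) *
          (2 * x * q * (1 - (q ^ 2) ^ (i + 1)) ^ 2 / (q ^ 2) ^ (i + 1)) -
        lowerInvEntry C q x k (i + 2) *
          ((1 - (q ^ 2) ^ (i + 1)) * (1 - (q ^ 2) ^ (i + 2)) / (q ^ 2) ^ (i + 1)) := by
  have hp0 : q ^ 2 ≠ 0 := pow_ne_zero 2 hq0
  have hrec := ultraEval_zpow_neg_recurrence hC hp0 hq x k i
  have h₀ := lowerInvCoeff_succ hq0 hq k i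
  have h₁ := lowerInvCoeff_succ hq0 hq k (i + 1)
  rw [lowerEigenvalue_sub hp0, add_comm i k]
  simp only [lowerInvEntry]
  push_cast
  generalize ultraEval C (q ^ 2) ((q ^ 2) ^ (-k : ℤ)) x = c at hrec ⊢
  generalize (q ^ 2) ^ (-k : ℤ) = r at hrec ⊢
  refine mul_left_cancel₀ (pow_ne_zero (2 * k + 1) hq0) ?_
  linear_combination (norm := skip) (1 - (q ^ 2) ^ (i + 1)) / (q ^ 2) ^ (i + 1) *
    (lowerInvCoeff q k (i + 1) * hrec + c (k - (i + 2)) * h₁) -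
      q ^ (2 * k + 1) * c (k - i) * (1 - (q ^ 2) ^ i * r) / (q ^ 2) ^ i * h₀
  field_simp
  ring

lemma sum_mul_eq_of_adjoint_recurrences {R : Type*} [CommRing R] {u v : R} {f g a b l : ℕ → R}
    (hb : b 0 = 0) (hf : ∀ i, f i * (l i - u) = f (i + 1) * a i - f (i + 2) * b (i + 1))
    (hg0 : (l 0 - v) * g 0 = 0)
    (hg : ∀ m, (l (m + 1) - v) * g (m + 1) = a m * g m - b m * g (m - 1)) (N : ℕ) :
    (v - u) * ∑ m ∈ range (N + 1), f m * g m =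
      f (N + 1) * a N * g N - f (N + 2) * b (N + 1) * g N - f (N + 1) * b N * g (N - 1) := by
  induction N with
  | zero =>
    simp only [zero_add, sum_range_one, hb]
    linear_combination g 0 * hf 0 - f 0 * hg0
  | succ N ih =>
    rw [sum_range_succ, mul_add, ih, Nat.add_sub_cancel]
    linear_combination g (N + 1) * hf (N + 1) - f (N + 1) * hg N

lemma sum_lowerInvEntry_mul_lowerEntry (hC : IsUltra C) (hq0 : q ≠ 0) (hq : ¬IsOfFinOrder (q ^ 2))
    (x : ℂ) {k k' : ℕ} (h : k ≠ k') :
    ∑ m ∈ range (k + 1), lowerInvEntry C q x k m * lowerEntry C q x m k' = 0 := by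
  have hp0 : q ^ 2 ≠ 0 := pow_ne_zero 2 hq0
  have hsum := sum_mul_eq_of_adjoint_recurrences (u := lowerEigenvalue (q ^ 2) k)
    (v := lowerEigenvalue (q ^ 2) k') (f := lowerInvEntry C q x k)
    (g := (lowerEntry C q x · k')) (l := lowerEigenvalue (q ^ 2))
    (a := fun m => 2 * x * q * (1 - (q ^ 2) ^ (m + 1)) ^ 2 / (q ^ 2) ^ (m + 1))
    (b := fun m => (1 - (q ^ 2) ^ m) * (1 - (q ^ 2) ^ (m + 1)) / (q ^ 2) ^ m) (by simp)
    (lowerInvEntry_recurrence hC hq0 hq x k) ?_ ?_ k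
  · rw [lowerInvEntry_eq_zero x (by omega), lowerInvEntry_eq_zero x (by omega)] at hsum
    simpa [sub_ne_zero.2 (lowerEigenvalue_ne hp0 hq h.symm)] using hsum
  · obtain rfl | hk' := Nat.eq_zero_or_pos k'
    · rw [sub_self, zero_mul]
    · rw [lowerEntry_eq_zero x hk', mul_zero]
  · intro m
    have hrec := lowerEntry_recurrence hC hq0 hq x m k'
    rw [lowerEigenvalue_sub hp0, show m + 1 + k' + 1 = m + k' + 2 by ring]
    linear_combination (norm := skip) (-q / (q ^ 2) ^ (m + 1)) * hrec
    field_simp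
    ring

lemma sum_lowerInvEntry_mul_lowerEntry_eq_ite (hC : IsUltra C) (hq0 : q ≠ 0)
    (hq : ¬IsOfFinOrder (q ^ 2)) (x : ℂ) {L k : ℕ} (hk : k ≤ L) (k' : ℕ) :
    ∑ m ∈ range (L + 1), lowerInvEntry C q x k m * lowerEntry C q x m k' =
      if k = k' then 1 else 0 := by
  rw [← sum_subset (range_mono (Nat.succ_le_succ hk)) fun m _ hm => by
    rw [lowerInvEntry_eq_zero x (by simpa using hm), zero_mul]]
  split_ifs with h
  · subst h
    rw [sum_range_succ, lowerInvEntry_self hC hq, lowerEntry_self hC hq, mul_one,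
      sum_eq_zero fun m hm => by rw [lowerEntry_eq_zero x (mem_range.1 hm), mul_zero], zero_add]
  · exact sum_lowerInvEntry_mul_lowerEntry hC hq0 hq x h

lemma sum_lowerEntry_mul_lowerInvEntry (hC : IsUltra C) (hq0 : q ≠ 0)
    (hq : ¬IsOfFinOrder (q ^ 2)) (x : ℂ) {L i j : ℕ} (hi : i ≤ L) (hj : j ≤ L) :
    ∑ k ∈ range (L + 1), lowerEntry C q x j k * lowerInvEntry C q x k i =
      if i = j then 1 else 0 := by
  let A : Matrix (Fin (L + 1)) (Fin (L + 1)) ℂ := Matrix.of fun k m => lowerInvEntry C q x k m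
  let B : Matrix (Fin (L + 1)) (Fin (L + 1)) ℂ := Matrix.of fun m k => lowerEntry C q x m k
  have hAB : A * B = 1 := by
    ext k k'
    rw [Matrix.mul_apply, Matrix.one_apply]
    simp only [A, B, Matrix.of_apply, Fin.ext_iff]
    rw [Fin.sum_univ_eq_sum_range (fun m => lowerInvEntry C q x k m * lowerEntry C q x m k')]
    exact sum_lowerInvEntry_mul_lowerEntry_eq_ite hC hq0 hq x (Nat.lt_succ_iff.1 k.2) k'
  have hBA : B * A = 1 := mul_eq_one_comm.1 hAB
  have hji := congrFun (congrFun hBA ⟨j, by omega⟩) ⟨i, by omega⟩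
  rw [Matrix.mul_apply, Matrix.one_apply] at hji
  simp only [A, B, Matrix.of_apply, Fin.ext_iff] at hji
  rw [Fin.sum_univ_eq_sum_range (fun k => lowerEntry C q x j k * lowerInvEntry C q x k i)] at hji
  simpa only [eq_comm] using hji

end TriangularFactors

/-! ### The three-term recurrence of `P_n` -/

section Recurrence

variable {C : ℂ → ℂ → ℕ → Polynomial ℂ} {q : ℂ}

/-- The entries of `P_n(x)`, with indices in `ℕ`. -/
def polyEntry (C : ℂ → ℂ → ℕ → Polynomial ℂ) (q x : ℂ) (L n i j : ℕ) : ℂ :=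
  ∑ k ∈ range (L + 1), lowerInvEntry C q x k i * racahNorm q L k *
    (racahValue (q ^ 2) L k n j * lowerEntry C q x (n + j) k)

lemma polyEntry_zero (hC : IsUltra C) (hq0 : q ≠ 0) (hq : ¬IsOfFinOrder (q ^ 2)) (x : ℂ)
    {L i j : ℕ} (hi : i ≤ L) (hj : j ≤ L) :
    polyEntry C q x L 0 i j = if i = j then 1 else 0 := by
  rw [← sum_lowerEntry_mul_lowerInvEntry hC hq0 hq x hi hj, polyEntry]
  refine sum_congr rfl fun k hk => ?_
  have hkL : k ≤ L := mem_range_succ_iff.1 hk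
  rw [zero_add]
  obtain hkj | hjk := le_or_gt k j
  · rw [racahValue_zero (pow_ne_zero 2 hq0) hq hkL hkj]
    linear_combination lowerInvEntry C q x k i * lowerEntry C q x j k *
      racahNorm_mul_racahPoleSum hq0 hq hkL
  · rw [lowerEntry_eq_zero x hjk, zero_mul, mul_zero, mul_zero]

lemma racahValue_raise_mul_lowerEntry (hq0 : q ≠ 0) (hq : ¬IsOfFinOrder (q ^ 2)) (x : ℂ)
    {L k j : ℕ} (hj : j ≤ L) (hk : k ≤ L) (n : ℕ) :
    (1 - (q ^ 2) ^ (n + j + 1) * (q ^ 2) ^ (-k : ℤ)) * (1 - (q ^ 2) ^ (n + j + k + 2)) *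
        (1 - (q ^ 2) ^ (L - j + n + 1)) * racahValue (q ^ 2) L k n j *
        lowerEntry C q x (n + j + 1) k =
      (1 - (q ^ 2) ^ (n + j + 1)) *
        ((1 - (q ^ 2) ^ (n + 1)) * (1 - (q ^ 2) ^ (n + L + 2)) * racahValue (q ^ 2) L k (n + 1) j +
          (q ^ 2) ^ (n + 1) * (1 - (q ^ 2) ^ (j + 1)) * (1 - (q ^ 2) ^ (L - j)) *
            racahValue (q ^ 2) L k n (j + 1)) *
        lowerEntry C q x (n + j + 1) k := by
  obtain hkn | hkn := le_or_gt k (n + j + 1)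
  · rw [racahValue_raise (pow_ne_zero 2 hq0) hq hj hk hkn]
  · rw [lowerEntry_eq_zero x hkn, mul_zero, mul_zero]

lemma racahValue_lower_mul_lowerEntry (hq0 : q ≠ 0) (hq : ¬IsOfFinOrder (q ^ 2)) (x : ℂ)
    {L j : ℕ} (hj : j ≤ L) (n k : ℕ) :
    (1 - (q ^ 2) ^ (n + j)) * (1 - (q ^ 2) ^ (L - j + n + 1)) * racahValue (q ^ 2) L k n j *
        lowerEntry C q x (n + j - 1) k =
      ((1 - (q ^ 2) ^ n) * (1 - (q ^ 2) ^ (n + L + 1)) * racahValue (q ^ 2) L k (n - 1) j +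
          (q ^ 2) ^ n * (1 - (q ^ 2) ^ (L - j + 1)) * (1 - (q ^ 2) ^ j) *
            racahValue (q ^ 2) L k n (j - 1)) *
        lowerEntry C q x (n + j - 1) k := by
  obtain hkn | hkn := le_or_gt (k + 1) (n + j)
  · rw [racahValue_lower (pow_ne_zero 2 hq0) hq hj hkn]
  obtain hnj | hnj := Nat.eq_zero_or_pos (n + j)
  · obtain ⟨rfl, rfl⟩ := Nat.add_eq_zero_iff.1 hnj
    simp
  · rw [lowerEntry_eq_zero x (by omega), mul_zero, mul_zero]

lemma racahValue_mul_lowerEntry_recurrence (hC : IsUltra C) (hq0 : q ≠ 0)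
    (hq : ¬IsOfFinOrder (q ^ 2)) (x : ℂ) {L k j : ℕ} (hj : j ≤ L) (hk : k ≤ L) (n : ℕ) :
    2 * x * ((1 - (q ^ 2) ^ (n + j + 1)) * (1 - (q ^ 2) ^ (L - j + n + 1))) *
        (racahValue (q ^ 2) L k n j * lowerEntry C q x (n + j) k) =
      q⁻¹ * (1 - (q ^ 2) ^ (n + 1)) * (1 - (q ^ 2) ^ (n + L + 2)) *
          (racahValue (q ^ 2) L k (n + 1) j * lowerEntry C q x (n + 1 + j) k) +
        q⁻¹ * (q ^ 2) ^ (n + 1) * (1 - (q ^ 2) ^ (j + 1)) * (1 - (q ^ 2) ^ (L - j)) *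
          (racahValue (q ^ 2) L k n (j + 1) * lowerEntry C q x (n + (j + 1)) k) +
        q⁻¹ * (q ^ 2) ^ (n + 1) * (1 - (q ^ 2) ^ (L - j + 1)) * (1 - (q ^ 2) ^ j) *
          (racahValue (q ^ 2) L k n (j - 1) * lowerEntry C q x (n + (j - 1)) k) +
        q * (1 - (q ^ 2) ^ n) * (1 - (q ^ 2) ^ (n + L + 1)) *
          (racahValue (q ^ 2) L k (n - 1) j * lowerEntry C q x (n - 1 + j) k) := by
  have hrec := lowerEntry_recurrence hC hq0 hq x (n + j) k
  have hraise := racahValue_raise_mul_lowerEntry (C := C) hq0 hq x hj hk n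
  have hlower := racahValue_lower_mul_lowerEntry (C := C) hq0 hq x hj n k
  have hpredj : (1 - (q ^ 2) ^ j) * lowerEntry C q x (n + (j - 1)) k =
      (1 - (q ^ 2) ^ j) * lowerEntry C q x (n + j - 1) k := by
    cases j with
    | zero => simp
    | succ j => rfl
  have hpredn : (1 - (q ^ 2) ^ n) * lowerEntry C q x (n - 1 + j) k =
      (1 - (q ^ 2) ^ n) * lowerEntry C q x (n + j - 1) k := by
    cases n with
    | zero => simp
    | succ n => rw [show n + 1 - 1 + j = n + 1 + j - 1 by omega]
  refine mul_left_cancel₀ (one_sub_pow_ne_zero hq (Nat.add_one_ne_zero (n + j))) ?_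
  rw [show n + 1 + j = n + j + 1 by ring, ← add_assoc n j 1]
  have hqq : q⁻¹ * (q ^ 2) ^ (n + 1) = q * (q ^ 2) ^ n := by
    rw [pow_succ, pow_two q]; field_simp
  linear_combination (1 - (q ^ 2) ^ (L - j + n + 1)) * racahValue (q ^ 2) L k n j * hrec +
    q⁻¹ * hraise + (1 - (q ^ 2) ^ (n + j + 1)) * (q * hlower -
      q⁻¹ * (q ^ 2) ^ (n + 1) * (1 - (q ^ 2) ^ (L - j + 1)) *
        racahValue (q ^ 2) L k n (j - 1) * hpredj -
      q * (1 - (q ^ 2) ^ (n + L + 1)) * racahValue (q ^ 2) L k (n - 1) j * hpredn -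
      (1 - (q ^ 2) ^ (L - j + 1)) * (1 - (q ^ 2) ^ j) * racahValue (q ^ 2) L k n (j - 1) *
        lowerEntry C q x (n + j - 1) k * hqq)

lemma polyEntry_recurrence (hC : IsUltra C) (hq0 : q ≠ 0) (hq : ¬IsOfFinOrder (q ^ 2)) (x : ℂ)
    {L j : ℕ} (hj : j ≤ L) (n i : ℕ) :
    2 * x * ((1 - (q ^ 2) ^ (n + j + 1)) * (1 - (q ^ 2) ^ (L - j + n + 1))) *
        polyEntry C q x L n i j =
      q⁻¹ * (1 - (q ^ 2) ^ (n + 1)) * (1 - (q ^ 2) ^ (n + L + 2)) *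
          polyEntry C q x L (n + 1) i j +
        q⁻¹ * (q ^ 2) ^ (n + 1) * (1 - (q ^ 2) ^ (j + 1)) * (1 - (q ^ 2) ^ (L - j)) *
          polyEntry C q x L n i (j + 1) +
        q⁻¹ * (q ^ 2) ^ (n + 1) * (1 - (q ^ 2) ^ (L - j + 1)) * (1 - (q ^ 2) ^ j) *
          polyEntry C q x L n i (j - 1) +
        q * (1 - (q ^ 2) ^ n) * (1 - (q ^ 2) ^ (n + L + 1)) * polyEntry C q x L (n - 1) i j := by
  simp only [polyEntry, mul_sum, ← sum_add_distrib]
  refine sum_congr rfl fun k hk => ?_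
  linear_combination lowerInvEntry C q x k i * racahNorm q L k *
    racahValue_mul_lowerEntry_recurrence hC hq0 hq x hj (mem_range_succ_iff.1 hk) n

lemma polyEntry_sub_sub (hC : IsUltra C) (hq0 : q ≠ 0) (hq : ¬IsOfFinOrder (q ^ 2)) (x : ℂ)
    (n : ℕ) {L i j : ℕ} (hi : i ≤ L) (hj : j ≤ L) :
    polyEntry C q x L n (L - i) (L - j) = polyEntry C q x L n i j := by
  induction n using Nat.strong_induction_on generalizing j with
  | _ n ih =>
  cases n with
  | zero =>
    rw [polyEntry_zero hC hq0 hq x (by omega) (by omega), polyEntry_zero hC hq0 hq x hi hj]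
    exact if_congr (by omega) rfl rfl
  | succ n =>
    have hrec := polyEntry_recurrence hC hq0 hq x hj n i
    have hrec' := polyEntry_recurrence hC hq0 hq x (Nat.sub_le L j) n (L - i)
    have hsucc : (1 - (q ^ 2) ^ (L - j)) * polyEntry C q x L n i (j + 1) =
        (1 - (q ^ 2) ^ (L - j)) * polyEntry C q x L n (L - i) (L - j - 1) := by
      obtain rfl | hlt := hj.eq_or_lt
      · simp
      · rw [← ih n n.lt_succ_self hlt, Nat.sub_sub]
    have hpred : (1 - (q ^ 2) ^ j) * polyEntry C q x L n i (j - 1) =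
        (1 - (q ^ 2) ^ j) * polyEntry C q x L n (L - i) (L - j + 1) := by
      cases j with
      | zero => simp
      | succ j => rw [← ih n n.lt_succ_self (by omega : j + 1 - 1 ≤ L),
          show L - (j + 1 - 1) = L - (j + 1) + 1 by omega]
    rw [Nat.sub_sub_self hj, ih n n.lt_succ_self hj, ih (n - 1) (by omega) hj,
      show n + (L - j) + 1 = L - j + n + 1 by ring, show j + n + 1 = n + j + 1 by ring] at hrec'
    have hne : q⁻¹ * (1 - (q ^ 2) ^ (n + 1)) * (1 - (q ^ 2) ^ (n + L + 2)) ≠ 0 :=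
      mul_ne_zero (mul_ne_zero (inv_ne_zero hq0) (one_sub_pow_ne_zero hq n.succ_ne_zero))
        (one_sub_pow_ne_zero hq (n + L + 1).succ_ne_zero)
    refine mul_left_cancel₀ hne ?_
    linear_combination hrec - hrec' +
      q⁻¹ * (q ^ 2) ^ (n + 1) * (1 - (q ^ 2) ^ (j + 1)) * hsucc +
      q⁻¹ * (q ^ 2) ^ (n + 1) * (1 - (q ^ 2) ^ (L - j + 1)) * hpred

end Recurrence

/-! ### The matrix-valued polynomials -/

section MatrixPolynomial

variable {C : ℂ → ℂ → ℕ → Polynomial ℂ} {q : ℂ}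

lemma qRacah_eq_racahValue {p : ℂ} (hp0 : p ≠ 0) (L k n j : ℕ) :
    qRacah p 1 1 (p ^ (-(n + j + 1 : ℕ) : ℤ)) (p ^ (-(L + 1 : ℕ) : ℤ)) k j =
      racahValue p L k n j := by
  have hb : p ^ (-(n + j + 1 : ℕ) : ℤ) * p ^ (-(L + 1 : ℕ) : ℤ) * p ^ (j + 1) =
      p ^ (-(n + L + 1 : ℕ) : ℤ) := by
    rw [← zpow_natCast, ← zpow_add₀ hp0, ← zpow_add₀ hp0]; congr 1; push_cast; ring
  rw [qRacah, racahValue, racahSum]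
  simp only [hb, one_mul, mul_comm _ p, mul_zpow_neg_succ hp0]
  refine sum_subset_zero_on_sdiff (range_mono (by omega)) (fun s hs => ?_) fun s _ => ?_
  · have hjs : j < s := by simp only [mem_sdiff, mem_range] at hs; omega
    rw [qp_pow_neg_eq_zero hp0 hjs, zero_mul, zero_div, mul_zero]
  · rw [racahCoeff]; ring_nf

lemma evP_coeff_eq (hq0 : q ≠ 0) (hq : ¬IsOfFinOrder (q ^ 2)) {L n i j k : ℕ} (hkL : k ≤ L)
    (hkn : k ≤ n + j) :
    (-1) ^ k * q ^ ((n : ℤ) + (2 * k + 1) * (k - i) + j * (2 * k + 1) + 2 * k * (L + n + 1) -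
            (k : ℤ) ^ 2) *
          (qp (q ^ 2) (q ^ 2) k * qp (q ^ 2) (q ^ 2) (k + i) /
            (qp (q ^ 2) (q ^ 2) (2 * k) * qp (q ^ 2) (q ^ 2) i)) *
          (qp (q ^ (-(2 * (L : ℤ)))) (q ^ 2) k * qp (q ^ (-(2 * (j : ℤ) + 2 * n))) (q ^ 2) k /
            (qp (q ^ 2) (q ^ 2) k * qp (q ^ (2 * (L : ℤ) + 4)) (q ^ 2) k)) *
          (qp (q ^ 2) (q ^ 2) (n + j - k) /
            qp (q ^ (4 * (k : ℤ) + 4)) (q ^ 2) (n + j - k)) =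
      lowerInvCoeff q k i * racahNorm q L k * lowerCoeff q (n + j) k := by
  have hL : q ^ (2 * (L : ℤ) + 4) = (q ^ 2) ^ (L + 1 + 1) := by
    rw [← pow_mul, ← zpow_natCast]; congr 1
  have hk : q ^ (4 * (k : ℤ) + 4) = (q ^ 2) ^ (2 * k + 1 + 1) := by
    rw [← pow_mul, ← zpow_natCast]; congr 1; push_cast; ring
  have hexp : q ^ ((n : ℤ) + (2 * k + 1) * (k - i) + j * (2 * k + 1) + 2 * k * (L + n + 1) -
        (k : ℤ) ^ 2) * q ^ (k * (k - 1 - 2 * L) : ℤ) * q ^ (k * (k - 1 - 2 * (n + j : ℕ)) : ℤ) =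
      q ^ ((2 * k + 1) * (k - i) : ℤ) * q ^ (k * (k + 1)) * q ^ ((n + j : ℕ) - k : ℤ) := by
    rw [← zpow_natCast q (k * (k + 1))]
    simp only [← zpow_add₀ hq0]
    congr 1; push_cast; ring
  have hsign : ((-1 : ℂ) ^ k) ^ 2 = 1 := by rw [pow_right_comm, neg_one_sq, one_pow]
  rw [show -(2 * (j : ℤ) + 2 * n) = -(2 * (n + j : ℕ)) by push_cast; ring, hL, hk,
    qp_sq_zpow_neg hq0 hq hkL, qp_sq_zpow_neg hq0 hq hkn, qp_pow_succ hq, qp_pow_succ hq,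
    lowerInvCoeff, racahNorm, lowerCoeff, show L + 1 + k = L + k + 1 by omega,
    show 2 * k + 1 + (n + j - k) = n + j + k + 1 by omega]
  have hb := qp_self_ne_zero hq (n + j - k)
  generalize qp (q ^ 2) (q ^ 2) = Q at *
  generalize (-1 : ℂ) ^ k = ε at *
  generalize q ^ ((n : ℤ) + (2 * k + 1) * (k - i) + j * (2 * k + 1) + 2 * k * (L + n + 1) -
        (k : ℤ) ^ 2) = X at *
  generalize q ^ (k * (k - 1 - 2 * L) : ℤ) = Y at *
  generalize q ^ (k * (k - 1 - 2 * (n + j : ℕ)) : ℤ) = Z at *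
  trans Q (n + j - k) * (Q (n + j - k))⁻¹ * ε ^ 2 * (X * Y * Z) *
    (ε * (Q k * Q (k + i) / (Q (2 * k) * Q i)) * (Q L * Q (L + 1) / (Q (L - k) * Q (L + k + 1))) *
    (Q (n + j) * Q (2 * k + 1) / (Q (n + j + k + 1) * Q k)))
  · simp only [div_eq_mul_inv, mul_inv, inv_inv]
    ring
  · rw [hsign, hexp, mul_inv_cancel₀ hb]
    ring

lemma evP_apply (hq0 : q ≠ 0) (hq : ¬IsOfFinOrder (q ^ 2)) (x : ℂ) (L n : ℕ) (i j : Fin (L + 1)) :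
    evP q L C n x i j = polyEntry C q x L n i j := by
  rw [evP, Pm, map_apply, of_apply, eval_finsetSum, polyEntry]
  refine sum_subset_zero_on_sdiff (fun k hk => ?_) (fun k hk => ?_) fun k hk => ?_
  · simp only [mem_Icc, mem_range] at hk ⊢; omega
  · simp only [mem_sdiff, mem_Icc, mem_range] at hk
    obtain hki | hkn : k < i ∨ n + j < k := by omega
    · rw [lowerInvEntry_eq_zero x hki, zero_mul, zero_mul]
    · rw [lowerEntry_eq_zero x hkn, mul_zero, mul_zero]
  · have hik : (i : ℕ) ≤ k := (mem_Icc.1 hk).1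
    obtain ⟨hkL, hkn⟩ : k ≤ L ∧ k ≤ n + j := le_min_iff.1 (mem_Icc.1 hk).2
    have hβ : q ^ (2 * (k : ℤ) + 2) = (q ^ 2) ^ (k + 1) := by
      rw [← pow_mul, ← zpow_natCast]; congr 1
    have hsq : ∀ (a : ℕ) (b : ℤ), b = -(2 * a : ℤ) → q ^ b = (q ^ 2) ^ (-a : ℤ) := by
      rintro a b rfl
      rw [← zpow_natCast q 2, ← _root_.zpow_mul]; congr 1; push_cast; ring
    rw [eval_mul, eval_C, eval_mul, evP_coeff_eq hq0 hq hkL hkn, hβ, hsq k _ rfl,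
      hsq (n + j + 1) _ (by push_cast; ring), hsq (L + 1) _ (by push_cast; ring),
      qRacah_eq_racahValue (pow_ne_zero 2 hq0), lowerInvEntry, lowerEntry,
      ← Nat.cast_sub hik, ← Nat.cast_sub hkn, ultraEval_natCast, ultraEval_natCast]
    ring

end MatrixPolynomial

section Flip

variable {L : ℕ}

lemma Jm_mul_apply (A : Matrix (Fin (L + 1)) (Fin (L + 1)) ℂ) (i j : Fin (L + 1)) :
    (Jm L * A) i j = A i.rev j := by
  rw [mul_apply, sum_eq_single i.rev]
  · rw [Jm, of_apply, if_pos (by rw [Fin.val_rev]; omega), one_mul]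
  · intro k _ hk
    rw [Jm, of_apply, if_neg (fun h => hk (Fin.ext (by rw [Fin.val_rev]; omega))), zero_mul]
  · simp

lemma mul_Jm_apply (A : Matrix (Fin (L + 1)) (Fin (L + 1)) ℂ) (i j : Fin (L + 1)) :
    (A * Jm L) i j = A i j.rev := by
  rw [mul_apply, sum_eq_single j.rev]
  · rw [Jm, of_apply, if_pos (by rw [Fin.val_rev]; omega), mul_one]
  · intro k _ hk
    rw [Jm, of_apply, if_neg (fun h => hk (Fin.ext (by rw [Fin.val_rev]; omega))), mul_zero]
  · simp

lemma Jm_mul_mul_Jm_evP {C : ℂ → ℂ → ℕ → Polynomial ℂ} {q : ℂ} (hC : IsUltra C) (hq0 : q ≠ 0)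
    (hq : ¬IsOfFinOrder (q ^ 2)) (n : ℕ) (x : ℂ) :
    Jm L * evP q L C n x * Jm L = evP q L C n x := by
  ext i j
  have hrev : ∀ k : Fin (L + 1), (k.rev : ℕ) = L - k := fun k => by rw [Fin.val_rev]; omega
  rw [mul_Jm_apply, Jm_mul_apply, evP_apply hq0 hq, evP_apply hq0 hq, hrev, hrev,
    polyEntry_sub_sub hC hq0 hq x n i.is_le j.is_le]

end Flip

/-! ### The weight -/

section Weight

variable {q : ℂ} {L m n t : ℕ}

/-- The coefficients `α_t(m,n)` in a form symmetric in `m` and `n`, under `m ↔ 2ℓ - m`,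
`n ↔ 2ℓ - n`, and under `t ↔ m + n + 1 - t`. Only meaningful for `t ≤ m + n ≤ L + t`. -/
def weightCoeff (q : ℂ) (L m n t : ℕ) : ℂ :=
  (-1) ^ (m + n) * q ^ (2 * (t - m) * (t - n) + m + n - 2 * t - L : ℤ) *
      (1 - (q ^ 2) ^ (L + 1)) ^ 2 *
      (qp (q ^ 2) (q ^ 2) m * qp (q ^ 2) (q ^ 2) n *
        (qp (q ^ 2) (q ^ 2) (L - m) * qp (q ^ 2) (q ^ 2) (L - n))) /
    (qp (q ^ 2) (q ^ 2) t * qp (q ^ 2) (q ^ 2) (m + n + 1 - t) *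
      (qp (q ^ 2) (q ^ 2) (L + 1 - t) * qp (q ^ 2) (q ^ 2) (L + t - m - n)))

/-- The entries of the weight as polynomials, with the summands that vanish or cancel removed. -/
def weightPoly (q : ℂ) (L m n : ℕ) : Polynomial ℂ :=
  ∑ t ∈ Icc (m + n - L) (min m n),
    Polynomial.C (weightCoeff q L m n t) * Chebyshev.U ℂ (m + n - 2 * t)

lemma alphaC_eq_zero (hq0 : q ≠ 0) (hm : m ≤ L) (h : L + t < m + n) : alphaC q L m n t = 0 := by
  have hneg : q ^ (2 * (m : ℤ) - 2 * L) = (q ^ 2) ^ (-(L - m : ℕ) : ℤ) := by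
    rw [← zpow_natCast q 2, ← _root_.zpow_mul]; congr 1; push_cast [hm]; ring
  rw [alphaC, hneg, qp_pow_neg_eq_zero (pow_ne_zero 2 hq0) (by omega), mul_zero, zero_div, mul_zero,
    zero_mul]

lemma alphaC_eq_weightCoeff (hq0 : q ≠ 0) (hq : ¬IsOfFinOrder (q ^ 2)) (hm : m ≤ L) (hn : n ≤ L)
    (ht : t ≤ n) (h : m + n ≤ L + t) : alphaC q L m n t = weightCoeff q L m n t := by
  have hL : q ^ (2 * (L : ℤ) + 2) = (q ^ 2) ^ (L + 1) := by
    rw [← pow_mul, ← zpow_natCast]; congr 1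
  have hm₁ : q ^ (2 * (m : ℤ) + 2) = (q ^ 2) ^ (m + 1) := by
    rw [← pow_mul, ← zpow_natCast]; congr 1
  have hm₂ : q ^ (2 * (m : ℤ) + 4) = (q ^ 2) ^ (m + 1 + 1) := by
    rw [← pow_mul, ← zpow_natCast]; congr 1
  have hLt : q ^ (2 * (L : ℤ) + 4 - 2 * t) = (q ^ 2) ^ (L + 1 - t + 1) := by
    rw [← pow_mul, ← zpow_natCast]; congr 1; omega
  have hexp : q ^ (2 * (n : ℤ) * (L + 1) - (n : ℤ) ^ 2 - (2 * L + 3) * t + (t : ℤ) ^ 2 - L + m) *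
        q ^ ((n - t : ℕ) * ((n - t : ℕ) - 1 - 2 * (L - m : ℕ)) : ℤ) =
      q ^ (2 * (t - m) * (t - n) + m + n - 2 * t - L : ℤ) := by
    rw [← zpow_add₀ hq0]; congr 1; push_cast [ht, hm]; ring
  have hsign : (-1 : ℂ) ^ ((m : ℤ) - t) * (-1) ^ (n - t) = (-1) ^ (m + n) := by
    rw [← zpow_natCast, ← zpow_natCast, ← zpow_add₀ (by norm_num)]
    rw [show (m : ℤ) - t + (n - t : ℕ) = (m + n : ℕ) + 2 * -t by omega,
      zpow_add₀ (by norm_num), _root_.zpow_mul]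
    simp
  rw [alphaC, show 2 * (m : ℤ) - 2 * L = -(2 * (L - m : ℕ)) by push_cast [hm]; ring, hL, hm₁, hm₂,
    hLt, qp_sq_zpow_neg hq0 hq (by omega), qp_pow_succ hq, qp_pow_succ hq, weightCoeff, ← hexp,
    ← hsign, show L + 1 - t + t = L + 1 by omega, show m + 1 + (n - t) = m + n + 1 - t by omega,
    show L - m - (n - t) = L + t - m - n by omega, qp_self_succ _ m, qp_self_succ _ L]
  have hQ := mul_inv_cancel₀ (qp_self_ne_zero hq L)
  have hG := mul_inv_cancel₀ (one_sub_pow_ne_zero hq m.succ_ne_zero)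
  generalize qp (q ^ 2) (q ^ 2) = Q at *
  generalize 1 - (q ^ 2) ^ (m + 1) = G at *
  generalize 1 - (q ^ 2) ^ (L + 1) = H at *
  rw [← one_mul (_ / (Q t * _ * _)), ← hQ, ← one_mul (Q L * _), ← hG]
  simp only [div_eq_mul_inv, mul_inv, inv_inv]
  ring

lemma weightCoeff_comm (q : ℂ) (L m n t : ℕ) : weightCoeff q L m n t = weightCoeff q L n m t := by
  rw [weightCoeff, weightCoeff, add_comm m n, Nat.sub_right_comm (L + t) m n,
    mul_right_comm 2 (t - m : ℤ), add_right_comm _ (m : ℤ)]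
  ring

lemma weightCoeff_flip (q : ℂ) (L : ℕ) (ht : t ≤ m + n + 1) :
    weightCoeff q L m n (m + n + 1 - t) = weightCoeff q L m n t := by
  have hexp : 2 * ((m + n + 1 - t : ℕ) - m : ℤ) * ((m + n + 1 - t : ℕ) - n) + m + n -
      2 * (m + n + 1 - t : ℕ) - L = 2 * (t - m) * (t - n) + m + n - 2 * t - L := by
    rw [Nat.cast_sub (by omega)]; push_cast; ring
  rw [weightCoeff, weightCoeff, hexp, show m + n + 1 - (m + n + 1 - t) = t by omega,
    show L + 1 - (m + n + 1 - t) = L + t - m - n by omega,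
    show L + (m + n + 1 - t) - m - n = L + 1 - t by omega,
    mul_comm (qp _ _ t), mul_comm (qp _ _ (L + 1 - t))]

lemma weightCoeff_sub_sub (q : ℂ) (hm : m ≤ L) (hn : n ≤ L) (h : m + n ≤ L + t) :
    weightCoeff q L (L - m) (L - n) (L + t - m - n) = weightCoeff q L m n t := by
  have hsign : (-1 : ℂ) ^ (L - m + (L - n)) = (-1) ^ (m + n) :=
    neg_one_pow_congr (by rw [Nat.even_iff, Nat.even_iff]; omega)
  have hexp : 2 * ((L + t - m - n : ℕ) - (L - m : ℕ) : ℤ) * ((L + t - m - n : ℕ) - (L - n : ℕ)) +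
      (L - m : ℕ) + (L - n : ℕ) - 2 * (L + t - m - n : ℕ) - L =
      2 * (t - m) * (t - n) + m + n - 2 * t - L := by
    rw [Nat.sub_sub, Nat.cast_sub h]; push_cast [hm, hn]; ring
  rw [weightCoeff, weightCoeff, hsign, hexp,
    show L - m + (L - n) + 1 - (L + t - m - n) = L + 1 - t by omega,
    show L + 1 - (L + t - m - n) = m + n + 1 - t by omega,
    show L + (L + t - m - n) - (L - m) - (L - n) = t by omega, Nat.sub_sub_self hm,
    Nat.sub_sub_self hn]
  ring

lemma weightCoeff_ne_zero (hq0 : q ≠ 0) (hq : ¬IsOfFinOrder (q ^ 2)) (L m n t : ℕ) :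
    weightCoeff q L m n t ≠ 0 := by
  have h := one_sub_pow_ne_zero hq L.succ_ne_zero
  simp only [weightCoeff, ne_eq, div_eq_zero_iff, mul_eq_zero, pow_eq_zero_iff', neg_eq_zero,
    one_ne_zero, zpow_ne_zero _ hq0, h, qp_self_ne_zero hq, false_and, or_self, not_false_eq_true]

lemma weightPoly_comm (q : ℂ) (L m n : ℕ) : weightPoly q L m n = weightPoly q L n m := by
  simp only [weightPoly, weightCoeff_comm q L m n, min_comm m, add_comm m, add_comm (m : ℤ)]

lemma weightPoly_sub_sub (q : ℂ) (hm : m ≤ L) (hn : n ≤ L) :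
    weightPoly q L (L - m) (L - n) = weightPoly q L m n := by
  refine (sum_bij' (fun t _ => L + t - m - n) (fun t _ => m + n + t - L) ?_ ?_ ?_ ?_ ?_).symm
  iterate 4 simp only [mem_Icc]; omega
  intro t ht
  have ht' : m + n ≤ L + t := by simp only [mem_Icc] at ht; omega
  rw [weightCoeff_sub_sub q hm hn ht']
  congr 2
  omega

lemma sum_Icc_weightCoeff_mul_U_eval (x : ℂ) (hn : n ≤ L) (hmn : m ≤ n) :
    ∑ t ∈ Icc (m + n - L) n, weightCoeff q L m n t * (Chebyshev.U ℂ (m + n - 2 * t)).eval x =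
      (weightPoly q L m n).eval x := by
  have hU : ∀ t ∈ Icc (m + n - L) n \ Icc (m + n - L) m,
      weightCoeff q L m n t * (Chebyshev.U ℂ (m + n - 2 * t)).eval x +
        weightCoeff q L m n (m + n + 1 - t) *
          (Chebyshev.U ℂ (m + n - 2 * (m + n + 1 - t : ℕ))).eval x = 0 := fun t ht => by
    have ht' : m < t ∧ t ≤ n := by simp only [mem_sdiff, mem_Icc] at ht; omega
    rw [weightCoeff_flip q L (by omega),
      show (m + n - 2 * (m + n + 1 - t : ℕ) : ℤ) = -(m + n - 2 * t) - 2 by omega,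
      Chebyshev.U_neg_sub_two, eval_neg, mul_neg, add_neg_cancel]
  rw [weightPoly, eval_finsetSum, min_eq_left hmn, ← sum_sdiff (Icc_subset_Icc_right hmn)]
  simp only [eval_mul, eval_C]
  rw [add_eq_right]
  refine sum_involution (fun t _ => m + n + 1 - t) hU (fun t ht hne heq => hne ?_) ?_ ?_
  · have h := hU t ht
    rw [heq] at h
    exact self_eq_neg.1 (eq_neg_of_add_eq_zero_left h)
  · simp only [mem_sdiff, mem_Icc]; omega
  · simp only [mem_sdiff, mem_Icc]; omega

lemma Wm_apply (hq0 : q ≠ 0) (hq : ¬IsOfFinOrder (q ^ 2)) (x : ℂ) (i j : Fin (L + 1)) :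
    Wm q L x i j = (weightPoly q L i j).eval x := by
  wlog hij : (i : ℕ) ≤ j generalizing i j
  · rw [weightPoly_comm, ← this j i (le_of_not_ge hij)]
    simp only [Wm, of_apply, max_comm, min_comm]
  rw [← sum_Icc_weightCoeff_mul_U_eval x j.is_le hij, Wm, of_apply, max_eq_right hij,
    min_eq_left hij, max_eq_right (mod_cast hij), min_eq_left (mod_cast hij)]
  symm
  refine sum_subset_zero_on_sdiff (fun t ht => ?_) (fun t ht => ?_) fun t ht => ?_
  · simp only [mem_Icc, mem_range] at ht ⊢; omega
  · simp only [mem_sdiff, mem_Icc, mem_range] at ht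
    rw [alphaC_eq_zero hq0 i.is_le (by omega), zero_mul]
  · simp only [mem_Icc] at ht
    rw [alphaC_eq_weightCoeff hq0 hq i.is_le j.is_le ht.2 (by omega)]

end Weight

lemma coeff_U_eq_zero_of_odd (R : Type*) [CommRing R] (n d : ℕ) (h : Odd (n + d)) :
    (Chebyshev.U R n).coeff d = 0 := by
  induction n using Nat.twoStepInduction generalizing d with
  | zero =>
    have hd : d ≠ 0 := by rintro rfl; simp at h
    simp [coeff_one, hd]
  | one =>
    have hd : 1 ≠ d := by rintro rfl; exact absurd h (by decide)
    rw [Nat.cast_one, Chebyshev.U_one, ← C_ofNat, coeff_C_mul, coeff_X, if_neg hd, mul_zero]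
  | more n ih ih' =>
    push_cast at ih' ⊢
    rw [Chebyshev.U_add_two, coeff_sub, ih d (by grind), sub_zero, mul_assoc, ← C_ofNat,
      coeff_C_mul]
    cases d with
    | zero => simp
    | succ d => rw [coeff_X_mul, ih' d (by grind), mul_zero]

section WeightCoefficients

variable {L m n d : ℕ}

lemma weightPoly_coeff (q : ℂ) (L m n d : ℕ) :
    (weightPoly q L m n).coeff d = ∑ t ∈ Icc (m + n - L) (min m n),
      weightCoeff q L m n t * (Chebyshev.U ℂ (m + n - 2 * t : ℕ)).coeff d := by
  rw [weightPoly, finsetSum_coeff]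
  refine sum_congr rfl fun t ht => ?_
  rw [coeff_C_mul, Nat.cast_sub (by simp only [mem_Icc] at ht; omega)]
  push_cast
  rfl

lemma weightPoly_coeff_eq_zero_of_lt (q : ℂ) (h : m + n < d ∨ 2 * L < m + n + d) :
    (weightPoly q L m n).coeff d = 0 := by
  rw [weightPoly_coeff]
  refine sum_eq_zero fun t ht => ?_
  rw [coeff_eq_zero_of_natDegree_lt, mul_zero]
  rw [Chebyshev.natDegree_U_natCast]
  simp only [mem_Icc] at ht
  omega

lemma weightPoly_coeff_eq_zero_of_odd (q : ℂ) (L : ℕ) (h : Odd (m + n + d)) :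
    (weightPoly q L m n).coeff d = 0 := by
  rw [weightPoly_coeff]
  refine sum_eq_zero fun t ht => ?_
  have ht' : 2 * t ≤ m + n := by simp only [mem_Icc] at ht; omega
  rw [coeff_U_eq_zero_of_odd, mul_zero]
  grind

lemma weightPoly_coeff_add (q : ℂ) (h : m + n ≤ L) :
    (weightPoly q L m n).coeff (m + n) = 2 ^ (m + n) * weightCoeff q L m n 0 := by
  rw [weightPoly_coeff, Nat.sub_eq_zero_of_le h, sum_eq_single_of_mem 0 (by simp)]
  · have hU := Chebyshev.leadingCoeff_U_natCast ℂ (m + n)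
    rw [leadingCoeff, Chebyshev.natDegree_U_natCast] at hU
    rw [mul_zero, Nat.sub_zero, hU, mul_comm]
  · intro t ht ht0
    rw [coeff_eq_zero_of_natDegree_lt, mul_zero]
    rw [Chebyshev.natDegree_U_natCast]
    simp only [mem_Icc] at ht
    omega

lemma weightPoly_coeff_ne_zero_of_add_eq {q : ℂ} (hq0 : q ≠ 0) (hq : ¬IsOfFinOrder (q ^ 2))
    (h : m + n = d) (hd : d ≤ L) : (weightPoly q L m n).coeff d ≠ 0 := by
  rw [← h, weightPoly_coeff_add q (h.trans_le hd)]
  exact mul_ne_zero (pow_ne_zero _ two_ne_zero) (weightCoeff_ne_zero hq0 hq L m n 0)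

lemma weightCoeff_add_zero {q : ℂ} (hq : ¬IsOfFinOrder (q ^ 2)) (m n : ℕ) :
    weightCoeff q (m + n) m n 0 = (-1) ^ (m + n) * (q ^ 2) ^ (m * n) *
      (qp (q ^ 2) (q ^ 2) m * qp (q ^ 2) (q ^ 2) n / qp (q ^ 2) (q ^ 2) (m + n)) ^ 2 := by
  have hexp : (2 * ((0 : ℕ) - m) * ((0 : ℕ) - n) + m + n - 2 * (0 : ℕ) - (m + n : ℕ) : ℤ) =
      (2 * (m * n) : ℕ) := by push_cast; ring
  have hG := one_sub_pow_ne_zero hq (m + n).succ_ne_zero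
  rw [weightCoeff, hexp, zpow_natCast, pow_mul, Nat.add_sub_cancel_left, Nat.add_sub_cancel,
    show m + n + 0 - m - n = 0 by omega, Nat.sub_zero, qp_self_succ, qp_zero]
  field_simp

end WeightCoefficients

/-! ### The top coefficient at real `q` -/

section RealParameter

variable {r : ℝ} {m n : ℕ}

lemma pow_mul_one_sub_pow_sq_lt (hr0 : 0 < r) (hr : r ≠ 1) (hm : m ≠ 0) (n : ℕ) :
    r ^ m * (1 - r ^ n) ^ 2 < (1 - r ^ (m + n)) ^ 2 := by
  have hpos : 0 < (1 - r ^ m) * (1 - r ^ (m + 2 * n)) := by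
    rcases hr.lt_or_gt with h | h
    · exact mul_pos (sub_pos.2 (pow_lt_one₀ hr0.le h hm))
        (sub_pos.2 (pow_lt_one₀ hr0.le h (by omega)))
    · exact mul_pos_of_neg_of_neg (sub_neg.2 (one_lt_pow₀ h hm))
        (sub_neg.2 (one_lt_pow₀ h (by omega)))
  rw [← sub_pos]
  convert hpos using 1
  ring

lemma norm_qp_self_succ_sq (r : ℝ) (n : ℕ) :
    ‖qp r r (n + 1)‖ ^ 2 = ‖qp r r n‖ ^ 2 * (1 - r ^ (n + 1)) ^ 2 := by
  rw [qp_self_succ, norm_mul, mul_pow, ← Complex.ofReal_pow, ← Complex.ofReal_one,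
    ← Complex.ofReal_sub, Complex.norm_real, Real.norm_eq_abs, sq_abs]

lemma not_isOfFinOrder_ofReal (hr0 : 0 < r) (hr : r ≠ 1) : ¬IsOfFinOrder (r : ℂ) := by
  rw [isOfFinOrder_iff_pow_eq_one]
  rintro ⟨n, hn, h⟩
  exact hr ((pow_eq_one_iff_of_nonneg hr0.le hn.ne').1 (mod_cast h))

lemma not_isOfFinOrder_ofReal_sq {q : ℝ} (hq0 : q ≠ 0) (hq : q ^ 2 ≠ 1) :
    ¬IsOfFinOrder ((q : ℂ) ^ 2) := by
  rw [← Complex.ofReal_pow]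
  exact not_isOfFinOrder_ofReal (by positivity) hq

lemma pow_mul_norm_qp_mul_norm_qp_lt (hr0 : 0 < r) (hr : r ≠ 1) (hm : m ≠ 0) (hn : n ≠ 0) :
    r ^ (m * n) * (‖qp r r m‖ ^ 2 * ‖qp r r n‖ ^ 2) < ‖qp r r (m + n)‖ ^ 2 := by
  have hstep : ∀ j, r ^ (j * n) * (‖qp r r j‖ ^ 2 * ‖qp r r n‖ ^ 2) ≤ ‖qp r r (j + n)‖ ^ 2 →
      r ^ ((j + 1) * n) * (‖qp r r (j + 1)‖ ^ 2 * ‖qp r r n‖ ^ 2) <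
        ‖qp r r (j + 1 + n)‖ ^ 2 := fun j hj =>
    have hpos : 0 < ‖qp r r (j + n)‖ ^ 2 :=
      pow_pos (norm_pos_iff.2 (qp_self_ne_zero (not_isOfFinOrder_ofReal hr0 hr) _)) 2
    calc r ^ ((j + 1) * n) * (‖qp r r (j + 1)‖ ^ 2 * ‖qp r r n‖ ^ 2)
      _ = r ^ (j * n) * (‖qp r r j‖ ^ 2 * ‖qp r r n‖ ^ 2) * (r ^ n * (1 - r ^ (j + 1)) ^ 2) := by
        rw [norm_qp_self_succ_sq]; ring
      _ ≤ ‖qp r r (j + n)‖ ^ 2 * (r ^ n * (1 - r ^ (j + 1)) ^ 2) := by gcongr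
      _ < ‖qp r r (j + n)‖ ^ 2 * (1 - r ^ (n + (j + 1))) ^ 2 := by
        gcongr; exact pow_mul_one_sub_pow_sq_lt hr0 hr hn _
      _ = ‖qp r r (j + 1 + n)‖ ^ 2 := by
        rw [add_right_comm, norm_qp_self_succ_sq, add_comm n, add_right_comm]
  induction m, Nat.one_le_iff_ne_zero.2 hm using Nat.le_induction with
  | base => exact hstep 0 (by simp)
  | succ j _ ih => exact hstep j (ih (by omega)).le

lemma norm_weightCoeff_add_zero_lt_one {q : ℝ} (hq0 : q ≠ 0) (hq : q ^ 2 ≠ 1) (hm : m ≠ 0)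
    (hn : n ≠ 0) : ‖weightCoeff q (m + n) m n 0‖ < 1 := by
  have hr0 : 0 < q ^ 2 := by positivity
  have hfin := not_isOfFinOrder_ofReal_sq hq0 hq
  have hpos := norm_pos_iff.2 (qp_self_ne_zero hfin (m + n))
  have hlt := pow_mul_norm_qp_mul_norm_qp_lt hr0 hq hm hn
  rw [Complex.ofReal_pow] at hlt
  rw [weightCoeff_add_zero hfin]
  simp only [norm_mul, norm_pow, norm_neg, norm_one, one_pow, one_mul, norm_div, div_pow, mul_pow,
    Complex.norm_real, Real.norm_eq_abs, sq_abs]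
  rwa [mul_div_assoc', div_lt_one (by positivity)]

lemma weightPoly_coeff_add_sq_ne {q : ℝ} (hq0 : q ≠ 0) (hq : q ^ 2 ≠ 1) (hm : m ≠ 0)
    (hn : n ≠ 0) : (weightPoly q (m + n) m n).coeff (m + n) ^ 2 ≠
      (weightPoly q (m + n) 0 (m + n)).coeff (m + n) ^ 2 := fun h => by
  have hfin := not_isOfFinOrder_ofReal_sq hq0 hq
  have hcorner : weightCoeff q (m + n) 0 (m + n) 0 = (-1) ^ (m + n) := by
    simpa [div_self (qp_self_ne_zero hfin (m + n))] using weightCoeff_add_zero hfin 0 (m + n)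
  have hcoeff := weightPoly_coeff_add (q : ℂ) (zero_add (m + n)).le
  rw [zero_add, hcorner] at hcoeff
  rw [weightPoly_coeff_add _ le_rfl, hcoeff, mul_pow, mul_pow] at h
  have hnorm := congr_arg norm (mul_left_cancel₀ (pow_ne_zero 2 (pow_ne_zero _ two_ne_zero)) h)
  simp only [norm_pow, norm_neg, norm_one, one_pow] at hnorm
  exact (pow_lt_one₀ (norm_nonneg _) (norm_weightCoeff_add_zero_lt_one hq0 hq hm hn)
    two_ne_zero).ne hnorm

end RealParameter

/-! ### The commutant -/

section Commutant

variable {L : ℕ} {A B Y Z : Matrix (Fin (L + 1)) (Fin (L + 1)) ℂ}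

lemma commute_map_coeff_of_commute_map_eval {ι R : Type*} [Fintype ι] [CommRing R] [IsDomain R]
    {S : Set R} (hS : S.Infinite) {Y : Matrix ι ι R} {M : Matrix ι ι R[X]}
    (h : ∀ x ∈ S, Y * M.map (eval x) = M.map (eval x) * Y) (d : ℕ) :
    Y * M.map (coeff · d) = M.map (coeff · d) * Y := by
  have hpoly : Y.map Polynomial.C * M = M * Y.map Polynomial.C := by
    ext1 i j
    refine eq_of_infinite_eval_eq _ _ (hS.mono fun x hx => ?_)
    simpa [mul_apply, eval_finsetSum] using congr_fun₂ (h x hx) i j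
  ext i j
  simpa [mul_apply, finsetSum_coeff] using congr_arg (coeff · d) (congr_fun₂ hpoly i j)

lemma Jm_commute (h : ∀ i j, B i.rev j.rev = B i j) : Commute (Jm L) B := by
  ext i j
  rw [Jm_mul_apply, mul_Jm_apply, ← h, Fin.rev_rev]

lemma row_rev_eq_zero (hA : ∀ i j, j ≠ i.rev → A i j = 0) (hA' : ∀ i, A i i.rev ≠ 0)
    (hZA : Commute Z A) {i : Fin (L + 1)} (hZ : Z i = 0) : Z i.rev = 0 := by
  ext j
  have h := congr_fun₂ hZA.eq i j
  rw [mul_apply, mul_apply, sum_eq_zero fun k _ => by rw [hZ, Pi.zero_apply, zero_mul],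
    Fintype.sum_eq_single i.rev fun k hk => by rw [hA i k hk, zero_mul]] at h
  exact (mul_eq_zero.1 h.symm).resolve_left (hA' i)

lemma eq_zero_of_commute_of_row_zero (hA : ∀ i j, j ≠ i.rev → A i j = 0)
    (hA' : ∀ i, A i i.rev ≠ 0)
    (hB : ∀ i j : Fin (L + 1), (i : ℕ) + j + 1 ≠ L → (i : ℕ) + j ≠ L + 1 → B i j = 0)
    (hB' : ∀ i j : Fin (L + 1), (i : ℕ) + j + 1 = L → B i j ≠ 0)
    (hZA : Commute Z A) (hZB : Commute Z B) (hZ : Z 0 = 0) : Z = 0 := by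
  suffices h : ∀ i, Z i = 0 from funext h
  intro i
  induction i using WellFoundedLT.induction with
  | ind i ih =>
    cases i using Fin.cases with
    | zero => exact hZ
    | succ r =>
      rw [← r.succ.rev_rev]
      refine row_rev_eq_zero hA hA' hZA (funext fun j => ?_)
      have h := congr_fun₂ hZB.eq r.castSucc j
      rw [mul_apply, mul_apply, sum_eq_zero fun k _ => by rw [ih _ r.castSucc_lt_succ,
        Pi.zero_apply, zero_mul], Fintype.sum_eq_single r.succ.rev fun k hk => ?_] at h
      · refine (mul_eq_zero.1 h.symm).resolve_left (hB' _ _ ?_)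
        simp only [Fin.val_castSucc, Fin.val_rev, Fin.val_succ]; omega
      by_cases hrk : r + (k : ℕ) = L + 1
      · have hk' : k.rev < r.succ := by rw [Fin.lt_def, Fin.val_rev, Fin.val_succ]; omega
        rw [← k.rev_rev, row_rev_eq_zero hA hA' hZA (ih _ hk'), Pi.zero_apply, mul_zero]
      · have hk' : r + (k : ℕ) + 1 ≠ L := fun h' => hk (Fin.ext (by
          rw [Fin.val_rev, Fin.val_succ]; omega))
        rw [hB _ _ hk' hrk, zero_mul]

lemma apply_zero_eq_zero_of_commute (hA : ∀ i j, j ≠ i.rev → A i j = 0)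
    (hJA : ∀ i j, A i.rev j.rev = A i j) (hYA : Commute Y A) {j : Fin (L + 1)}
    (hj : A j j.rev ^ 2 ≠ A 0 (Fin.last L) ^ 2) : Y 0 j = 0 := by
  have hmul : ∀ i j, A i i.rev * Y i.rev j = Y i j.rev * A j j.rev := fun i j => by
    have h := congr_fun₂ hYA.eq i j
    rw [mul_apply, mul_apply, Fintype.sum_eq_single j.rev fun k hk => by
      rw [hA k j (by rwa [ne_eq, ← Fin.rev_eq_iff, eq_comm]), mul_zero],
      Fintype.sum_eq_single i.rev fun k hk => by rw [hA i k hk, zero_mul], ← hJA, Fin.rev_rev] at h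
    exact h.symm
  have h₀ := hmul 0 j.rev
  have hL := hmul (Fin.last L) j
  have hA0 := hJA 0 (Fin.last L)
  have hAj := hJA j j.rev
  rw [Fin.rev_zero, Fin.rev_rev] at h₀
  rw [Fin.rev_last] at hL
  rw [Fin.rev_zero, Fin.rev_last] at hA0
  rw [Fin.rev_rev] at hAj
  rw [hA0] at hL
  rw [hAj] at h₀
  refine (mul_eq_zero.1 ?_).resolve_right (sub_ne_zero.2 hj)
  linear_combination -A j j.rev * h₀ - A 0 (Fin.last L) * hL

lemma eq_smul_one_add_smul_Jm_of_commute (hL : L ≠ 0) (hA : ∀ i j, j ≠ i.rev → A i j = 0)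
    (hA' : ∀ i, A i i.rev ≠ 0) (hJA : ∀ i j, A i.rev j.rev = A i j)
    (hA2 : ∀ i, i ≠ 0 → i ≠ Fin.last L → A i i.rev ^ 2 ≠ A 0 (Fin.last L) ^ 2)
    (hB : ∀ i j : Fin (L + 1), (i : ℕ) + j + 1 ≠ L → (i : ℕ) + j ≠ L + 1 → B i j = 0)
    (hB' : ∀ i j : Fin (L + 1), (i : ℕ) + j + 1 = L → B i j ≠ 0)
    (hJB : ∀ i j, B i.rev j.rev = B i j) (hYA : Commute Y A) (hYB : Commute Y B) :
    Y = Y 0 0 • (1 : Matrix (Fin (L + 1)) (Fin (L + 1)) ℂ) + Y 0 (Fin.last L) • Jm L := by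
  have hcomm : ∀ X, (∀ i j, X i.rev j.rev = X i j) → Commute Y X →
      Commute (Y - (Y 0 0 • 1 + Y 0 (Fin.last L) • Jm L)) X := fun X hJX hYX =>
    hYX.sub_left (((Commute.one_left X).smul_left _).add_left ((Jm_commute hJX).smul_left _))
  refine sub_eq_zero.1 (eq_zero_of_commute_of_row_zero hA hA' hB hB' (hcomm A hJA hYA)
    (hcomm B hJB hYB) (funext fun j => ?_))
  have h0L : Fin.last L ≠ 0 := mt Fin.last_eq_zero_iff.1 hL
  have hJ : Jm L 0 j = (1 : Matrix (Fin (L + 1)) (Fin (L + 1)) ℂ) (Fin.last L) j := by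
    rw [← mul_one (Jm L), Jm_mul_apply, Fin.rev_zero]
  simp only [Matrix.sub_apply, Matrix.add_apply, Matrix.smul_apply, smul_eq_mul, hJ, Pi.zero_apply]
  rcases eq_or_ne j 0 with rfl | hj0
  · simp [h0L]
  rcases eq_or_ne j (Fin.last L) with rfl | hjL
  · simp [h0L.symm]
  · simp [hj0.symm, hjL.symm, apply_zero_eq_zero_of_commute hA hJA hYA (hA2 j hj0 hjL)]

end Commutant

section WeightCommutant

variable {L : ℕ}

/-- The weight `W` as a matrix of polynomials. -/
def weightMatrix (q : ℂ) (L : ℕ) : Matrix (Fin (L + 1)) (Fin (L + 1)) ℂ[X] :=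
  of fun i j => weightPoly q L i j

lemma weightMatrix_map_eval {q : ℂ} (hq0 : q ≠ 0) (hq : ¬IsOfFinOrder (q ^ 2)) (L : ℕ) (x : ℂ) :
    (weightMatrix q L).map (eval x) = Wm q L x := by
  ext i j
  rw [map_apply, weightMatrix, of_apply, Wm_apply hq0 hq]

lemma weightMatrix_rev_rev (q : ℂ) (i j : Fin (L + 1)) :
    weightMatrix q L i.rev j.rev = weightMatrix q L i j := by
  rw [weightMatrix, of_apply, of_apply, ← weightPoly_sub_sub q i.is_le j.is_le, Fin.val_rev,
    Fin.val_rev, Nat.add_sub_add_right, Nat.add_sub_add_right]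

lemma exists_eq_of_commute_Wm {q : ℝ} (hq0 : q ≠ 0) (hq : q ^ 2 ≠ 1) {S : Set ℂ}
    (hS : S.Infinite) {Y : Matrix (Fin (L + 1)) (Fin (L + 1)) ℂ}
    (h : ∀ x ∈ S, Y * Wm q L x = Wm q L x * Y) :
    ∃ a b : ℂ, Y = a • (1 : Matrix (Fin (L + 1)) (Fin (L + 1)) ℂ) + b • Jm L := by
  have hfin := not_isOfFinOrder_ofReal_sq hq0 hq
  have hq0' : (q : ℂ) ≠ 0 := mod_cast hq0
  simp only [← weightMatrix_map_eval hq0' hfin] at h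
  have hcoeff := commute_map_coeff_of_commute_map_eval hS h
  have hrev : ∀ d i j, (weightMatrix q L).map (coeff · d) i.rev j.rev =
      (weightMatrix q L).map (coeff · d) i j := fun d i j => by
    rw [map_apply, map_apply, weightMatrix_rev_rev]
  obtain _ | d := L
  · refine ⟨Y 0 0, 0, ?_⟩
    ext i j
    simp [Fin.fin_one_eq_zero i, Fin.fin_one_eq_zero j]
  have hanti : ∀ i : Fin (d + 1 + 1), (i : ℕ) + i.rev = d + 1 := fun i => by
    rw [Fin.val_rev]; omega
  refine ⟨_, _, eq_smul_one_add_smul_Jm_of_commute d.succ_ne_zero (fun i j hij => ?_) (fun i => ?_)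
    (hrev (d + 1)) (fun i hi0 hiL => ?_) (fun i j hij hij' => ?_) (fun i j hij => ?_) (hrev d)
    (hcoeff (d + 1)) (hcoeff d)⟩
  all_goals simp only [map_apply, weightMatrix, of_apply]
  · have hij' : (i : ℕ) + j ≠ d + 1 := fun h' => hij (Fin.ext (by rw [Fin.val_rev]; omega))
    exact weightPoly_coeff_eq_zero_of_lt _ (by omega)
  · exact weightPoly_coeff_ne_zero_of_add_eq hq0' hfin (hanti i) le_rfl
  · have hi0' : (i : ℕ) ≠ 0 := fun h' => hi0 (Fin.ext h')
    have hiL' : (i.rev : ℕ) ≠ 0 := fun h' => hiL (Fin.ext (by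
      rw [← add_zero (i : ℕ), ← h', hanti, Fin.val_last]))
    simpa only [hanti i, Fin.val_zero, Fin.val_last] using
      weightPoly_coeff_add_sq_ne hq0 hq hi0' hiL'
  · rcases lt_trichotomy (i + j : ℕ) (d + 1) with h' | h' | h'
    · exact weightPoly_coeff_eq_zero_of_lt _ (by omega)
    · exact weightPoly_coeff_eq_zero_of_odd _ _ ⟨d, by omega⟩
    · exact weightPoly_coeff_eq_zero_of_lt _ (by omega)
  · exact weightPoly_coeff_ne_zero_of_add_eq hq0' hfin (Nat.succ_injective hij) d.le_succ

lemma Jm_commute_Wm {q : ℂ} (hq0 : q ≠ 0) (hq : ¬IsOfFinOrder (q ^ 2)) (x : ℂ) :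
    Commute (Jm L) (Wm q L x) :=
  Jm_commute fun i j => by
    rw [← weightMatrix_map_eval hq0 hq, map_apply, map_apply, weightMatrix_rev_rev]

end WeightCommutant

theorem stmt2_general {q : ℝ} (hq0 : q ≠ 0) (hq : q ^ 2 ≠ 1) (L : ℕ)
    {C : ℂ → ℂ → ℕ → Polynomial ℂ} (hC : IsUltra C) {S : Set ℂ} (hS : S.Infinite) :
    (∀ Y : Matrix (Fin (L + 1)) (Fin (L + 1)) ℂ,
        (∀ x ∈ S, Y * Wm q L x = Wm q L x * Y) ↔
          ∃ a b : ℂ, Y = a • (1 : Matrix (Fin (L + 1)) (Fin (L + 1)) ℂ) + b • Jm L) ∧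
      ∀ (n : ℕ) (x : ℂ), Jm L * evP q L C n x * Jm L = evP q L C n x := by
  have hfin := not_isOfFinOrder_ofReal_sq hq0 hq
  have hq0' : (q : ℂ) ≠ 0 := mod_cast hq0
  refine ⟨fun Y => ⟨exists_eq_of_commute_Wm hq0 hq hS, ?_⟩, Jm_mul_mul_Jm_evP hC hq0' hfin⟩
  rintro ⟨a, b, rfl⟩ x -
  exact ((Commute.one_left _).smul_left a).add_left ((Jm_commute_Wm hq0' hfin x).smul_left b)

/-- the commutant of `{W(x) : x ∈ (-1,1)}` is spanned by `I` and `J`,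
and `J P_n(x) J = P_n(x)` for all `n` and `x`. -/
theorem stmt2 (q : ℝ) (hq0 : 0 < q) (hq1 : q < 1) (L : ℕ)
    (C : ℂ → ℂ → ℕ → Polynomial ℂ) (hC : IsUltra C) :
    (∀ Y : Matrix (Fin (L + 1)) (Fin (L + 1)) ℂ,
        (∀ x : ℝ, -1 < x → x < 1 →
            Y * Wm (q : ℂ) L (x : ℂ) = Wm (q : ℂ) L (x : ℂ) * Y) ↔
          ∃ a b : ℂ, Y = a • (1 : Matrix (Fin (L + 1)) (Fin (L + 1)) ℂ) + b • Jm L) ∧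
      ∀ (n : ℕ) (x : ℂ), Jm L * evP (q : ℂ) L C n x * Jm L = evP (q : ℂ) L C n x := by
  have hIoo := (Set.Ioo_infinite (show (-1 : ℝ) < 1 by norm_num)).image
    Complex.ofReal_injective.injOn
  simpa only [Set.forall_mem_image, Set.mem_Ioo, and_imp] using
    stmt2_general hq0.ne' (pow_lt_one₀ hq0.le hq1 two_ne_zero).ne L hC hIoo

end
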